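/- (Pointwise decay of the conformal Killing derivative of the solution; flat case of Proposition 3.3.) Let n ≥ 3, p > n and δ ∈ (2−n, 0). There is a constant C > 0 such that if f : ℝⁿ → ℝⁿ is a smooth vector field with ‖f‖_{L^p_{δ−2}} < ∞ and W is the unique smooth vector field with ‖W‖_{W^{2,p}_δ} < ∞ solving Δ_L W = f, then for every x ∈ ℝⁿ, |𝒟W(x)| ≤ C ⟨x⟩^{δ−1} ‖f‖_{L^p_{δ−2}}, where |𝒟W(x)| is the Frobenius norm. -/

import Mathlib

/-!
The bound comes from an integral representation of `𝒟W(x)` whose kernel has size `‖y - x‖^(1-n)`,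
followed by Hölder's inequality.

Translate `x` to the origin. In coordinates the equation reads
`ΔW_j + (1 - 2/n) ∂_j div W = -f_j`, and taking a divergence gives `(2 - 2/n) Δ div W = -div f`.
The potential `u_j = W_j + ½ (1 - 2/n) y_j div W` therefore satisfies a scalar Poisson equation
`Δu_j = -f_j - c y_j div f` (`lap_potential`). At the origin its gradient differs from that of `W_j`
only by a multiple of the identity matrix, so `𝒟W(0)` is the symmetric trace-free part of `∇u(0)`
(`confKill_eq_potential`).

To bound `∂ᵢu_j(0)`, pair `∂ᵢ(χ u_j)` with the Laplacian of the regularised Newton kernel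
`Γ_ε(z) = (‖z‖² + ε²)^((2-n)/2)`, where `χ` is a cutoff at radius `R`. The Laplacian of `Γ_ε` is
a multiple of an approximate identity, and integration by parts moves all derivatives onto
`∂ᵢΓ_ε` or `z_j ∂ᵢΓ_ε`, including the one in `div f`; the resulting kernels are dominated by
`(‖z‖² + ε²)^((1-n)/2)` uniformly in `ε` (`cutoff_identity`). Letting `ε → 0` and then `R → ∞`
gives `|∇u_j(0)| ≤ K ∫ ‖z‖^(1-n) |f(z)| dz` (`scalar_bound`). The terms containing derivatives of
`χ` vanish in the limit because finiteness of the `W^{2,p}_δ` norm with `δ < 1` makes `D^k W`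
integrable against the weight `⟨z⟩^(k-n-1)` for `k = 0, 1, 2` (`integrable_of_weighted`).

Finally, Hölder's inequality bounds `∫ ‖y - x‖^(1-n) |f(y)| dy` by `‖f‖_{L^p_{δ-2}}` times the
`q`-th root of `∫ ‖y - x‖^(-a) ⟨y⟩^(-b) dy` with `a = (n-1)q` and `b = (2-δ-n/p)q`. The hypotheses
`p > n` and `2 - n < δ < 0` ensure `a, b < n < a + b`, and this integral is
`O(⟨x⟩^(n-a-b)) = O(⟨x⟩^((δ-1)q))` (`riesz_bound`, `newton_bound`).
-/

noncomputable section

open MeasureTheory Filter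
open scoped ENNReal Topology

/-- `n`-dimensional Euclidean space. -/
abbrev Euc (n : ℕ) := EuclideanSpace ℝ (Fin n)

/-- The Japanese bracket `⟨x⟩ = (1 + ‖x‖²)^(1/2)`. -/
def jap {n : ℕ} (x : Euc n) : ℝ := Real.sqrt (1 + ‖x‖ ^ 2)

/-- Partial derivative `∂ᵢ f` of a real-valued function. -/
def pd {n : ℕ} (i : Fin n) (f : Euc n → ℝ) (x : Euc n) : ℝ :=
  fderiv ℝ f x (EuclideanSpace.single i 1)

/-- The Euclidean Laplacian `Δf = Σᵢ ∂ᵢ²f`. -/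
def lap {n : ℕ} (f : Euc n → ℝ) (x : Euc n) : ℝ :=
  ∑ i, pd i (pd i f) x

/-- Divergence of a vector field. -/
def divg {n : ℕ} (W : Euc n → Euc n) (x : Euc n) : ℝ :=
  ∑ i, pd i (fun y => W y i) x

/-- The conformal Killing operator `(𝒟W)ᵢⱼ = ∂ᵢWⱼ + ∂ⱼWᵢ − (2/n)(div W)δᵢⱼ`. -/
def confKill {n : ℕ} (W : Euc n → Euc n) (x : Euc n) : Matrix (Fin n) (Fin n) ℝ :=
  Matrix.of fun i j =>
    pd i (fun y => W y j) x + pd j (fun y => W y i) x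
      - (2 / (n : ℝ)) * divg W x * (if i = j then 1 else 0)

/-- The Frobenius norm of a matrix. -/
def frob {n : ℕ} (M : Matrix (Fin n) (Fin n) ℝ) : ℝ :=
  Real.sqrt (∑ i, ∑ j, (M i j) ^ 2)

/-- The vector Laplacian `(Δ_L W)ⱼ = −Σᵢ ∂ᵢ (𝒟W)ᵢⱼ`. -/
def vecLap {n : ℕ} (W : Euc n → Euc n) (x : Euc n) : Euc n :=
  (EuclideanSpace.equiv (Fin n) ℝ).symm
    (fun j => -∑ i, pd i (fun y => confKill W y i j) x)

/-- Weighted `L^p_δ` norm (as an extended nonnegative real). -/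
def LpW {n : ℕ} {F : Type*} [NormedAddCommGroup F] (p δ : ℝ) (f : Euc n → F) : ℝ≥0∞ :=
  (∫⁻ x, ENNReal.ofReal ((jap x ^ (-δ - (n : ℝ) / p) * ‖f x‖) ^ p)) ^ (1 / p)

/-- Weighted Sobolev `W^{k,p}_δ` norm. -/
def SobW {n : ℕ} {F : Type*} [NormedAddCommGroup F] [NormedSpace ℝ F]
    (k : ℕ) (p δ : ℝ) (f : Euc n → F) : ℝ≥0∞ :=
  ∑ j ∈ Finset.range (k + 1),
    (∫⁻ x, ENNReal.ofReal
      ((jap x ^ (-δ - (n : ℝ) / p + (j : ℝ)) * ‖iteratedFDeriv ℝ j f x‖) ^ p)) ^ (1 / p)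

/-- Weighted `L^∞_δ` norm. -/
def LinfW {n : ℕ} {F : Type*} [NormedAddCommGroup F] (δ : ℝ) (f : Euc n → F) : ℝ≥0∞ :=
  ⨆ x, ENNReal.ofReal (jap x ^ (-δ) * ‖f x‖)

/-- Weighted `L^∞_δ` norm of a matrix field, pointwise Frobenius norm. -/
def LinfWM {n : ℕ} (δ : ℝ) (σ : Euc n → Matrix (Fin n) (Fin n) ℝ) : ℝ≥0∞ :=
  ⨆ x, ENNReal.ofReal (jap x ^ (-δ) * frob (σ x))

/-- `N = 2n/(n−2)`. -/
def Nc (n : ℕ) : ℝ := 2 * n / ((n : ℝ) - 2)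
/-- `c_n = (n−2)/(4(n−1))`. -/
def cc (n : ℕ) : ℝ := ((n : ℝ) - 2) / (4 * ((n : ℝ) - 1))
/-- `b_n = (n−2)/(4n)`. -/
def bc (n : ℕ) : ℝ := ((n : ℝ) - 2) / (4 * (n : ℝ))

/-- Componentwise smoothness of a matrix field. -/
def SmoothMat {n : ℕ} (σ : Euc n → Matrix (Fin n) (Fin n) ℝ) : Prop :=
  ∀ i j, ContDiff ℝ (⊤ : ℕ∞) fun x => σ x i j

/-- A matrix field is symmetric, trace-free and divergence-free. -/
def SymTT {n : ℕ} (σ : Euc n → Matrix (Fin n) (Fin n) ℝ) : Prop :=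
  (∀ x i j, σ x i j = σ x j i) ∧ (∀ x, ∑ i, σ x i i = 0) ∧
    (∀ x j, ∑ i, pd i (fun y => σ y i j) x = 0)

/-- The left-hand side of the Lichnerowicz (Hamiltonian) equation (i). -/
def HamExpr {n : ℕ} (τ : Euc n → ℝ) (σ : Euc n → Matrix (Fin n) (Fin n) ℝ)
    (ρ : Euc n → ℝ) (u : Euc n → ℝ) (W : Euc n → Euc n) (x : Euc n) : ℝ :=
  lap u x + cc n * frob (σ x + confKill W x) ^ 2 * u x ^ (-(Nc n) - 1)
    - bc n * τ x ^ 2 * u x ^ (Nc n - 1) + cc n * ρ x * u x ^ (-(Nc n) / 2)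

/-- Equation (i): the Lichnerowicz equation. -/
def HamEq {n : ℕ} (τ : Euc n → ℝ) (σ : Euc n → Matrix (Fin n) (Fin n) ℝ)
    (ρ : Euc n → ℝ) (u : Euc n → ℝ) (W : Euc n → Euc n) : Prop :=
  ∀ x, HamExpr τ σ ρ u W x = 0

/-- Equation (ii): the momentum constraint `Δ_L W + ((n−1)/n) u^N ∇τ + J = 0`. -/
def MomEq {n : ℕ} (τ : Euc n → ℝ) (J : Euc n → Euc n)
    (u : Euc n → ℝ) (W : Euc n → Euc n) : Prop :=
  ∀ x, vecLap W x + ((((n : ℝ) - 1) / n) * u x ^ Nc n) • gradient τ x + J x = 0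

/-- Global supersolution property for `φ₊`. -/
def GlobalSuperSol {n : ℕ} (p δ : ℝ) (τ : Euc n → ℝ)
    (σ : Euc n → Matrix (Fin n) (Fin n) ℝ) (ρ : Euc n → ℝ) (J : Euc n → Euc n)
    (φp : Euc n → ℝ) : Prop :=
  ∀ φ : Euc n → ℝ, Continuous φ → (∀ x, 0 < φ x ∧ φ x ≤ φp x) →
    ∀ W : Euc n → Euc n, ContDiff ℝ (⊤ : ℕ∞) W → SobW 2 p δ W < ⊤ → MomEq τ J φ W →
    ∀ x, HamExpr τ σ ρ φp W x ≤ 0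

/-- Global subsolution property for `φ₋`. -/
def GlobalSubSol {n : ℕ} (p δ : ℝ) (τ : Euc n → ℝ)
    (σ : Euc n → Matrix (Fin n) (Fin n) ℝ) (ρ : Euc n → ℝ) (J : Euc n → Euc n)
    (φm : Euc n → ℝ) : Prop :=
  ∀ φ : Euc n → ℝ, Continuous φ → (∀ x, φm x ≤ φ x) →
    ∀ W : Euc n → Euc n, ContDiff ℝ (⊤ : ℕ∞) W → SobW 2 p δ W < ⊤ → MomEq τ J φ W →
    ∀ x, 0 ≤ HamExpr τ σ ρ φm W x

/-! ### Partial derivatives -/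

/-- Smoothness of a scalar function on `ℝⁿ`. -/
abbrev Sm {n : ℕ} (f : Euc n → ℝ) : Prop := ContDiff ℝ (⊤ : ℕ∞) f

section Calculus
variable {n : ℕ}

lemma Sm.diff {f : Euc n → ℝ} (hf : Sm f) (x : Euc n) : DifferentiableAt ℝ f x :=
  (hf.differentiable (by simp)) x

lemma Sm.pd {f : Euc n → ℝ} (hf : Sm f) (i : Fin n) : Sm (pd i f) := by
  unfold _root_.pd
  exact (hf.fderiv_right (m := ((⊤ : ℕ∞) : WithTop ℕ∞)) (by simp)).clm_apply contDiff_const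

lemma Sm.lap {f : Euc n → ℝ} (hf : Sm f) : Sm (lap f) := by
  unfold _root_.lap
  exact ContDiff.sum fun i _ => (hf.pd i).pd i

lemma sm_coord (j : Fin n) : Sm (fun y : Euc n => y j) := by
  unfold Sm; fun_prop

lemma Sm.comp_coord {W : Euc n → Euc n} (hW : ContDiff ℝ (⊤ : ℕ∞) W) (j : Fin n) :
    Sm (fun y => W y j) :=
  (sm_coord j).comp hW

lemma sm_divg {W : Euc n → Euc n} (hW : ContDiff ℝ (⊤ : ℕ∞) W) : Sm (divg W) := by
  unfold divg
  exact ContDiff.sum fun i _ => (Sm.comp_coord hW i).pd i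

lemma pd_add {f g : Euc n → ℝ} (hf : Sm f) (hg : Sm g) (i : Fin n) (x : Euc n) :
    pd i (fun y => f y + g y) x = pd i f x + pd i g x := by
  simp [pd, fderiv_fun_add (hf.diff x) (hg.diff x)]

lemma pd_mul {f g : Euc n → ℝ} (hf : Sm f) (hg : Sm g) (i : Fin n) (x : Euc n) :
    pd i (fun y => f y * g y) x = f x * pd i g x + pd i f x * g x := by
  simp [pd, fderiv_fun_mul (hf.diff x) (hg.diff x)]; ring

lemma pd_const_mul {f : Euc n → ℝ} (hf : Sm f) (c : ℝ) (i : Fin n) (x : Euc n) :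
    pd i (fun y => c * f y) x = c * pd i f x := by
  simp [pd, fderiv_const_mul (hf.diff x)]

lemma pd_sum {ι : Type*} (s : Finset ι) {f : ι → Euc n → ℝ} (hf : ∀ k, Sm (f k))
    (i : Fin n) (x : Euc n) :
    pd i (fun y => ∑ k ∈ s, f k y) x = ∑ k ∈ s, pd i (f k) x := by
  simp [pd, fderiv_fun_sum (fun k _ => (hf k).diff x)]

lemma pd_coord (i j : Fin n) (x : Euc n) :
    pd i (fun y : Euc n => y j) x = if i = j then 1 else 0 := by
  have : (fun y : Euc n => y j) = (EuclideanSpace.proj j : Euc n →L[ℝ] ℝ) := rfl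
  rw [pd, this, ContinuousLinearMap.fderiv]
  simp [eq_comm]

lemma pd_comm {f : Euc n → ℝ} (hf : Sm f) (i j : Fin n) (x : Euc n) :
    pd i (pd j f) x = pd j (pd i f) x := by
  have h2 : ∀ (a b : Fin n), pd a (pd b f) x =
      fderiv ℝ (fderiv ℝ f) x (EuclideanSpace.single a 1) (EuclideanSpace.single b 1) := by
    intro a b
    have hd : DifferentiableAt ℝ (fderiv ℝ f) x :=
      ((hf.fderiv_right (m := ((⊤ : ℕ∞) : WithTop ℕ∞)) (by simp)).differentiable (by simp)) x
    have : pd b f = fun y => fderiv ℝ f y (EuclideanSpace.single b 1) := rfl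
    rw [pd, this, fderiv_clm_apply hd (by fun_prop)]
    simp
  rw [h2, h2]
  exact ((contDiff_infty.1 hf 2).contDiffAt.isSymmSndFDerivAt (by simp)) _ _

lemma pd_lap {f : Euc n → ℝ} (hf : Sm f) (i : Fin n) (x : Euc n) :
    pd i (lap f) x = lap (pd i f) x := by
  unfold lap
  rw [pd_sum _ (fun k => (hf.pd k).pd k)]
  refine Finset.sum_congr rfl fun k _ => ?_
  rw [pd_comm (hf.pd k)]
  congr 1
  funext y
  exact pd_comm hf i k y

lemma lap_add {f g : Euc n → ℝ} (hf : Sm f) (hg : Sm g) (x : Euc n) :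
    lap (fun y => f y + g y) x = lap f x + lap g x := by
  unfold lap
  rw [← Finset.sum_add_distrib]
  refine Finset.sum_congr rfl fun k _ => ?_
  rw [← pd_add (hf.pd k) (hg.pd k)]
  congr 1
  funext y
  exact pd_add hf hg k y

lemma lap_const_mul {f : Euc n → ℝ} (hf : Sm f) (c : ℝ) (x : Euc n) :
    lap (fun y => c * f y) x = c * lap f x := by
  unfold lap
  rw [Finset.mul_sum]
  refine Finset.sum_congr rfl fun k _ => ?_
  rw [← pd_const_mul (hf.pd k)]
  congr 1
  funext y
  exact pd_const_mul hf c k y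

lemma lap_mul {f g : Euc n → ℝ} (hf : Sm f) (hg : Sm g) (x : Euc n) :
    lap (fun y => f y * g y) x
      = f x * lap g x + 2 * ∑ k, pd k f x * pd k g x + g x * lap f x := by
  have key : ∀ k, pd k (pd k fun y => f y * g y) x
      = f x * pd k (pd k g) x + 2 * (pd k f x * pd k g x) + g x * pd k (pd k f) x := by
    intro k
    have h1 : (pd k fun y => f y * g y) = fun y => f y * pd k g y + pd k f y * g y := by
      funext y; exact pd_mul hf hg k y
    rw [h1, pd_add (hf.mul (hg.pd k)) ((hf.pd k).mul hg), pd_mul hf (hg.pd k),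
      pd_mul (hf.pd k) hg]
    ring
  simp only [lap, key, Finset.sum_add_distrib, Finset.mul_sum]

lemma lap_coord_mul {d : Euc n → ℝ} (hd : Sm d) (j : Fin n) (x : Euc n) :
    lap (fun y => y j * d y) x = x j * lap d x + 2 * pd j d x := by
  rw [lap_mul (sm_coord j) hd]
  have h : ∀ k, pd k (fun y : Euc n => y j) = fun _ => if k = j then (1 : ℝ) else 0 := by
    intro k; funext y; exact pd_coord k j y
  have h0 : lap (fun y : Euc n => y j) x = 0 := by
    unfold lap
    refine Finset.sum_eq_zero fun k _ => ?_
    rw [h k, pd]; simp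
  rw [h0]
  simp [h]

lemma HasCompactSupport.pd {f : Euc n → ℝ} (hf : HasCompactSupport f) (i : Fin n) :
    HasCompactSupport (pd i f) := hf.fderiv_apply ℝ _

/-- Integration by parts against a compactly supported function. -/
lemma ibp {f g : Euc n → ℝ} (hf : Sm f) (hg : Sm g) (hc : HasCompactSupport f) (i : Fin n) :
    ∫ x, f x * pd i g x = -∫ x, pd i f x * g x := by
  refine integral_mul_fderiv_eq_neg_fderiv_mul_of_integrable ?_ ?_ ?_
    (fun x _ => hf.diff x) (fun x _ => hg.diff x)
  · exact ((hf.pd i).continuous.mul hg.continuous).integrable_of_hasCompactSupport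
      ((hc.pd i).mul_right)
  · exact (hf.continuous.mul (hg.pd i).continuous).integrable_of_hasCompactSupport
      (hc.mul_right)
  · exact (hf.continuous.mul hg.continuous).integrable_of_hasCompactSupport (hc.mul_right)

lemma integrable_cs {f g : Euc n → ℝ} (hf : Continuous f) (hg : Continuous g)
    (hc : HasCompactSupport f) : Integrable fun x => f x * g x :=
  (hf.mul hg).integrable_of_hasCompactSupport hc.mul_right

/-- Green's identity in the form used below: `∫ ∂ᵢv ΔΓ = -∫ Δv ∂ᵢΓ`. -/
lemma green {v G : Euc n → ℝ} (hv : Sm v) (hG : Sm G) (hc : HasCompactSupport v) (i : Fin n) :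
    ∫ x, pd i v x * lap G x = -∫ x, lap v x * pd i G x := by
  have h1 : ∀ k, ∫ x, pd i v x * pd k (pd k G) x = -∫ x, pd k (pd k v) x * pd i G x := by
    intro k
    have a1 := ibp (hv.pd i) (hG.pd k) (hc.pd i) k
    have a2 := ibp (hv.pd k) (hG.pd k) (hc.pd k) i
    have a3 := ibp (hv.pd k) (hG.pd i) (hc.pd k) k
    have e1 : ∀ x, pd k (pd i v) x = pd i (pd k v) x := pd_comm hv k i
    have e2 : ∀ x, pd i (pd k G) x = pd k (pd i G) x := pd_comm hG i k
    simp only [e1, e2] at a1 a2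
    linarith
  simp only [lap, Finset.mul_sum, Finset.sum_mul]
  rw [integral_finsetSum _ fun k _ => integrable_cs (hv.pd i).continuous
      ((hG.pd k).pd k).continuous (hc.pd i),
    integral_finsetSum _ fun k _ => integrable_cs ((hv.pd k).pd k).continuous
      (hG.pd i).continuous ((hc.pd k).pd k), ← Finset.sum_neg_distrib]
  exact Finset.sum_congr rfl fun k _ => h1 k

end Calculus

/-! ### The regularised Newton kernel -/

section Kernel
variable {n : ℕ}

/-- The power `(‖z‖² + ε²)^a`, smooth for `ε ≠ 0`. -/
def regPow (ε a : ℝ) (z : Euc n) : ℝ := (‖z‖ ^ 2 + ε ^ 2) ^ a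

lemma reg_base_pos {ε : ℝ} (hε : 0 < ε) (z : Euc n) : 0 < ‖z‖ ^ 2 + ε ^ 2 := by positivity

lemma regPow_pos {ε : ℝ} (hε : 0 < ε) (a : ℝ) (z : Euc n) : 0 < regPow ε a z :=
  Real.rpow_pos_of_pos (reg_base_pos hε z) a

lemma sm_regPow {ε : ℝ} (hε : 0 < ε) (a : ℝ) : Sm (regPow (n := n) ε a) := by
  unfold regPow Sm
  exact ContDiff.rpow_const_of_ne ((contDiff_norm_sq ℝ).add contDiff_const)
    (fun z => (reg_base_pos hε z).ne')

lemma pd_regPow {ε : ℝ} (hε : 0 < ε) (a : ℝ) (k : Fin n) (z : Euc n) :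
    pd k (regPow ε a) z = 2 * a * (z k * regPow ε (a - 1) z) := by
  have h1 : HasFDerivAt (fun y : Euc n => ‖y‖ ^ 2 + ε ^ 2) (2 • (innerSL ℝ z)) z :=
    (hasStrictFDerivAt_norm_sq z).hasFDerivAt.add_const _
  have h2 := h1.rpow_const (p := a) (Or.inl (reg_base_pos hε z).ne')
  rw [pd, show regPow (n := n) ε a = fun y => (‖y‖ ^ 2 + ε ^ 2) ^ a from rfl, h2.fderiv]
  simp [regPow, EuclideanSpace.inner_single_right]
  ring

lemma regPow_add {ε : ℝ} (hε : 0 < ε) (a b : ℝ) (z : Euc n) :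
    regPow ε (a + b) z = regPow ε a z * regPow ε b z :=
  Real.rpow_add (reg_base_pos hε z) a b

lemma sum_coord_sq (z : Euc n) : ∑ i, z i * z i = ‖z‖ ^ 2 := by
  rw [EuclideanSpace.norm_sq_eq]
  simp [sq]

lemma abs_coord_le {ε : ℝ} (z : Euc n) (k : Fin n) : |z k| ≤ regPow ε (1 / 2) z := by
  rw [regPow, ← Real.sqrt_eq_rpow]
  apply Real.abs_le_sqrt
  have := PiLp.norm_apply_le z k
  rw [Real.norm_eq_abs] at this
  have h2 := pow_le_pow_left₀ (abs_nonneg _) this 2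
  rw [sq_abs] at h2
  nlinarith [sq_nonneg ε]

/-- `Γ_ε(z) = (‖z‖² + ε²)^((2-n)/2)`. -/
def Gam (n : ℕ) (ε : ℝ) : Euc n → ℝ := regPow ε ((2 - (n : ℝ)) / 2)

/-- `z_i (‖z‖² + ε²)^(-n/2)`, so that `∂ᵢΓ_ε = (2 - n) gk ε i`. -/
def gk (ε : ℝ) (i : Fin n) (z : Euc n) : ℝ := z i * regPow ε (-(n : ℝ) / 2) z

lemma sm_Gam {ε : ℝ} (hε : 0 < ε) : Sm (Gam n ε) := sm_regPow hε _

lemma sm_gk {ε : ℝ} (hε : 0 < ε) (i : Fin n) : Sm (gk ε i) :=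
  (sm_coord i).mul (sm_regPow hε _)

lemma pd_Gam {ε : ℝ} (hε : 0 < ε) (i : Fin n) (z : Euc n) :
    pd i (Gam n ε) z = (2 - (n : ℝ)) * gk ε i z := by
  rw [Gam, pd_regPow hε, gk]
  rw [show (2 - (n : ℝ)) / 2 - 1 = -(n : ℝ) / 2 by ring]
  ring

lemma pd_gk {ε : ℝ} (hε : 0 < ε) (i k : Fin n) (z : Euc n) :
    pd k (gk ε i) z = (if k = i then 1 else 0) * regPow ε (-(n : ℝ) / 2) z
      - n * (z i * z k * regPow ε (-(n : ℝ) / 2 - 1) z) := by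
  unfold gk
  rw [pd_mul (sm_coord i) (sm_regPow hε _), pd_coord, pd_regPow hε]
  ring

lemma lap_Gam {ε : ℝ} (hε : 0 < ε) (z : Euc n) :
    lap (Gam n ε) z = (2 - (n : ℝ)) * n * (ε ^ 2 * regPow ε (-(n : ℝ) / 2 - 1) z) := by
  have h : ∀ i, pd i (pd i (Gam n ε)) z = (2 - (n : ℝ)) * (regPow ε (-(n : ℝ) / 2) z
      - n * (z i * z i * regPow ε (-(n : ℝ) / 2 - 1) z)) := by
    intro i
    have : pd i (Gam n ε) = fun z => (2 - (n : ℝ)) * gk ε i z := funext (pd_Gam hε i)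
    rw [this, pd_const_mul (sm_gk hε i), pd_gk hε]
    simp
  simp only [lap, h]
  rw [← Finset.mul_sum, Finset.sum_sub_distrib, ← Finset.mul_sum, ← Finset.sum_mul, sum_coord_sq]
  have h3 : regPow ε (-(n : ℝ) / 2) z
      = (‖z‖ ^ 2 + ε ^ 2) * regPow ε (-(n : ℝ) / 2 - 1) z := by
    have := regPow_add hε 1 (-(n : ℝ) / 2 - 1) z
    rw [show (1 : ℝ) + (-(n : ℝ) / 2 - 1) = -(n : ℝ) / 2 by ring] at this
    rw [this]; simp [regPow]
  rw [h3]
  simp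
  ring

/-- The weight `(‖z‖² + ε²)^((1-n)/2)` dominating all kernels. -/
def kb (ε : ℝ) (z : Euc n) : ℝ := regPow ε ((1 - (n : ℝ)) / 2) z

lemma kb_pos {ε : ℝ} (hε : 0 < ε) (z : Euc n) : 0 < kb ε z := regPow_pos hε _ z

lemma continuous_kb {ε : ℝ} (hε : 0 < ε) : Continuous (kb (n := n) ε) :=
  (sm_regPow hε _).continuous

lemma abs_gk_le {ε : ℝ} (hε : 0 < ε) (i : Fin n) (z : Euc n) : |gk ε i z| ≤ kb ε z := by
  rw [gk, abs_mul, abs_of_pos (regPow_pos hε _ z), kb,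
    show (1 - (n : ℝ)) / 2 = 1 / 2 + -(n : ℝ) / 2 by ring, regPow_add hε]
  exact mul_le_mul_of_nonneg_right (abs_coord_le z i) (regPow_pos hε _ z).le

/-- `∂ₖ(z_j ∂ᵢΓ_ε)` has the same size as `∇Γ_ε`. -/
lemma abs_pd_gk_mul_le {ε : ℝ} (hε : 0 < ε) (i j k : Fin n) (z : Euc n) :
    |pd k (fun y => y j * gk ε i y) z| ≤ (n + 2) * kb ε z := by
  rw [pd_mul (sm_coord j) (sm_gk hε i), pd_coord, pd_gk hε]
  have e1 : |(if k = j then (1 : ℝ) else 0) * gk ε i z| ≤ kb ε z := by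
    split_ifs
    · simpa using abs_gk_le hε i z
    · simpa using (kb_pos hε z).le
  have e2 : |z j * ((if k = i then (1 : ℝ) else 0) * regPow ε (-(n : ℝ) / 2) z)| ≤ kb ε z := by
    split_ifs
    · simpa [gk] using abs_gk_le hε j z
    · simpa using (kb_pos hε z).le
  have e3 : |z j * (n * (z i * z k * regPow ε (-(n : ℝ) / 2 - 1) z))| ≤ n * kb ε z := by
    have hk : kb ε z = regPow ε (1 / 2) z * (regPow ε (1 / 2) z * regPow ε (1 / 2) z
        * regPow ε (-(n : ℝ) / 2 - 1) z) := by
      rw [kb, ← regPow_add hε, ← regPow_add hε, ← regPow_add hε]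
      congr 1; ring
    rw [show z j * (n * (z i * z k * regPow ε (-(n : ℝ) / 2 - 1) z))
      = n * (z j * (z i * z k * regPow ε (-(n : ℝ) / 2 - 1) z)) by ring, hk, abs_mul,
      Nat.abs_cast]
    refine mul_le_mul_of_nonneg_left ?_ (Nat.cast_nonneg n)
    rw [abs_mul, abs_mul, abs_mul, abs_of_pos (regPow_pos hε (-(n : ℝ) / 2 - 1) z)]
    have p1 := (regPow_pos hε (-(n : ℝ) / 2 - 1) z).le
    have p2 := (regPow_pos hε (1 / 2) z).le
    gcongr <;> exact abs_coord_le z _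
  calc _ = |z j * ((if k = i then (1 : ℝ) else 0) * regPow ε (-(n : ℝ) / 2) z)
        - z j * (n * (z i * z k * regPow ε (-(n : ℝ) / 2 - 1) z))
        + (if k = j then (1 : ℝ) else 0) * gk ε i z| := by congr 1; ring
    _ ≤ kb ε z + n * kb ε z + kb ε z :=
      (abs_add_le _ _).trans (add_le_add ((abs_sub _ _).trans (add_le_add e2 e3)) e1)
    _ = _ := by ring

lemma kb_le_norm (hn : 3 ≤ n) (ε : ℝ) {z : Euc n} (hz : z ≠ 0) :
    kb ε z ≤ ‖z‖ ^ (1 - (n : ℝ)) := by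
  have hz' : 0 < ‖z‖ := norm_pos_iff.2 hz
  have h3 : (3 : ℝ) ≤ n := by exact_mod_cast hn
  have : ‖z‖ ^ (1 - (n : ℝ)) = (‖z‖ ^ 2) ^ ((1 - (n : ℝ)) / 2) := by
    rw [← Real.rpow_natCast, ← Real.rpow_mul hz'.le]
    congr 1; push_cast; ring
  rw [this, kb, regPow]
  exact Real.rpow_le_rpow_of_nonpos (by positivity) (by nlinarith [sq_nonneg ε]) (by linarith)

/-- The constant `∫ (1 + ‖w‖²)^(-n/2-1)`. -/
def mass (n : ℕ) : ℝ := ∫ w : Euc n, regPow 1 (-(n : ℝ) / 2 - 1) w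

lemma integrable_regPow_one : Integrable (regPow (n := n) 1 (-(n : ℝ) / 2 - 1)) := by
  have := integrable_rpow_neg_one_add_norm_sq (E := Euc n) (μ := volume) (r := n + 2)
    (by simp)
  refine this.congr (Eventually.of_forall fun w => ?_)
  simp only [regPow]
  rw [add_comm]
  norm_num
  congr 1; ring

lemma mass_pos : 0 < mass n := by
  refine (integral_pos_iff_support_of_nonneg (fun w => (regPow_pos one_pos _ w).le)
    integrable_regPow_one).2 ?_
  have : Function.support (regPow (n := n) 1 (-(n : ℝ) / 2 - 1)) = Set.univ := by
    ext w; simp [(regPow_pos one_pos _ w).ne']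
  rw [this]
  exact isOpen_univ.measure_pos volume Set.univ_nonempty

/-- `ε² (‖z‖² + ε²)^(-n/2-1)` is an approximate identity of total mass `mass n`. -/
lemma tendsto_approx {h : Euc n → ℝ} (hh : Continuous h) (hc : HasCompactSupport h) :
    Tendsto (fun ε : ℝ => ∫ z, h z * (ε ^ 2 * regPow ε (-(n : ℝ) / 2 - 1) z)) (𝓝[>] 0)
      (𝓝 (h 0 * mass n)) := by
  obtain ⟨M, hM⟩ := hh.bounded_above_of_compact_support hc
  have e : ∀ ε : ℝ, 0 < ε → ∫ w, h (ε • w) * regPow 1 (-(n : ℝ) / 2 - 1) w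
      = ∫ z, h z * (ε ^ 2 * regPow ε (-(n : ℝ) / 2 - 1) z) := by
    intro ε hε
    have e0 := Measure.integral_comp_smul (volume : Measure (Euc n))
      (fun z => h z * (ε ^ 2 * regPow ε (-(n : ℝ) / 2 - 1) z)) ε
    have e1 : ∀ w : Euc n, h (ε • w) * (ε ^ 2 * regPow ε (-(n : ℝ) / 2 - 1) (ε • w))
        = (ε ^ n)⁻¹ * (h (ε • w) * regPow 1 (-(n : ℝ) / 2 - 1) w) := by
      intro w
      have : regPow ε (-(n : ℝ) / 2 - 1) (ε • w)
          = (ε ^ n)⁻¹ * (ε ^ 2)⁻¹ * regPow 1 (-(n : ℝ) / 2 - 1) w := by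
        unfold regPow
        rw [norm_smul, Real.norm_eq_abs, abs_of_pos hε,
          show (ε * ‖w‖) ^ 2 + ε ^ 2 = ε ^ 2 * (‖w‖ ^ 2 + 1 ^ 2) by ring,
          Real.mul_rpow (by positivity) (by positivity)]
        congr 1
        rw [← Real.rpow_natCast ε 2, ← Real.rpow_mul hε.le, ← Real.rpow_natCast ε n,
          ← Real.rpow_neg hε.le, ← Real.rpow_neg hε.le, ← Real.rpow_add hε]
        congr 1; push_cast; ring
      rw [this]; field_simp
    simp only [e1, integral_const_mul, finrank_euclideanSpace, Fintype.card_fin, smul_eq_mul] at e0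
    rw [abs_of_pos (by positivity)] at e0
    exact mul_left_cancel₀ (by positivity) e0
  have key : Tendsto (fun ε : ℝ => ∫ w, h (ε • w) * regPow 1 (-(n : ℝ) / 2 - 1) w) (𝓝[>] 0)
      (𝓝 (∫ w, h 0 * regPow (n := n) 1 (-(n : ℝ) / 2 - 1) w)) := by
    refine tendsto_integral_filter_of_dominated_convergence
      (fun w => M * regPow 1 (-(n : ℝ) / 2 - 1) w) ?_ ?_ ?_ ?_
    · refine Eventually.of_forall fun ε => Continuous.aestronglyMeasurable ?_
      exact (hh.comp (continuous_const_smul ε)).mul (sm_regPow one_pos _).continuous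
    · refine Eventually.of_forall fun ε => Eventually.of_forall fun w => ?_
      rw [norm_mul, Real.norm_of_nonneg (regPow_pos one_pos _ w).le]
      exact mul_le_mul_of_nonneg_right (hM _) (regPow_pos one_pos _ w).le
    · exact integrable_regPow_one.const_mul M
    · refine Eventually.of_forall fun w => ?_
      refine Tendsto.mul_const _ ?_
      have : Continuous fun ε : ℝ => h (ε • w) := by fun_prop
      have := (this.tendsto 0).mono_left (nhdsWithin_le_nhds (s := Set.Ioi 0))
      simpa using this
  rw [integral_const_mul] at key
  refine key.congr' ?_
  filter_upwards [self_mem_nhdsWithin] with ε hε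
  exact e ε hε

end Kernel

/-! ### Cutoff functions -/

section Cutoff
variable {n : ℕ}

lemma one_le_jap (z : Euc n) : 1 ≤ jap z := by
  rw [jap]; exact Real.one_le_sqrt.2 (by nlinarith [sq_nonneg ‖z‖])

lemma jap_pos (z : Euc n) : 0 < jap z := one_pos.trans_le (one_le_jap z)

lemma norm_le_jap (z : Euc n) : ‖z‖ ≤ jap z := by
  rw [jap]; exact Real.le_sqrt_of_sq_le (by linarith)

lemma jap_le (z : Euc n) : jap z ≤ 1 + ‖z‖ := by
  rw [jap, Real.sqrt_le_left (by positivity)]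
  nlinarith [norm_nonneg z]

lemma continuous_jap : Continuous (jap (n := n)) := by
  unfold jap; fun_prop

lemma continuous_jap_rpow (a : ℝ) : Continuous fun z : Euc n => jap z ^ a :=
  continuous_jap.rpow_const fun z => Or.inl (jap_pos z).ne'

lemma jap_rpow_pos (a : ℝ) (z : Euc n) : 0 < jap z ^ a := Real.rpow_pos_of_pos (jap_pos z) a

lemma pd_comp_smul (f : Euc n → ℝ) (r : ℝ) (k : Fin n) (z : Euc n) :
    pd k (fun y => f (r • y)) z = r * pd k f (r • z) := by
  rw [pd, fderiv_comp_smul]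
  simp [pd]

lemma pd_eq_zero_of_eventuallyEq_const {f : Euc n → ℝ} {c : ℝ} {z : Euc n}
    (h : f =ᶠ[𝓝 z] fun _ => c) (k : Fin n) : pd k f =ᶠ[𝓝 z] fun _ => 0 := by
  filter_upwards [h.eventuallyEq_nhds] with y hy
  rw [pd, hy.fderiv_eq]; simp

/-- Cutoffs, constant on the ball of radius `R`, whose gradient and Laplacian are bounded
by `M ⟨z⟩⁻¹` and `M ⟨z⟩⁻²` with `M` independent of `R`. -/
lemma exists_cutoff (n : ℕ) : ∃ M > (0 : ℝ), ∀ R : ℝ, 1 ≤ R → ∃ χ : Euc n → ℝ,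
    Sm χ ∧ HasCompactSupport χ ∧ (∀ z, |χ z| ≤ 1) ∧ χ 0 = 1 ∧
    (∀ k z, |pd k χ z| * jap z ≤ M) ∧ (∀ z, |lap χ z| * jap z ^ 2 ≤ M) ∧
    (∀ k z, ‖z‖ < R → pd k χ z = 0) ∧ (∀ z, ‖z‖ < R → lap χ z = 0) := by
  let b : ContDiffBump (0 : Euc n) := ⟨1, 2, one_pos, one_lt_two⟩
  have hb : Sm (b : Euc n → ℝ) := b.contDiff
  have hbc : HasCompactSupport (b : Euc n → ℝ) := b.hasCompactSupport
  have hfar : ∀ z : Euc n, 2 < ‖z‖ → (b : Euc n → ℝ) =ᶠ[𝓝 z] fun _ => 0 := by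
    intro z hz
    filter_upwards [(isOpen_lt continuous_const continuous_norm).mem_nhds hz] with y hy
    exact b.zero_of_le_dist (by simpa using (le_of_lt hy))
  have hnear : ∀ z : Euc n, ‖z‖ < 1 → (b : Euc n → ℝ) =ᶠ[𝓝 z] fun _ => 1 := by
    intro z hz
    filter_upwards [(isOpen_lt continuous_norm continuous_const).mem_nhds hz] with y hy
    exact b.one_of_mem_closedBall (by simpa using (le_of_lt hy))
  have hlap0 : ∀ z : Euc n, (∀ k, pd k b =ᶠ[𝓝 z] fun _ => 0) → lap b z = 0 := by
    intro z hz
    exact Finset.sum_eq_zero fun k _ => (pd_eq_zero_of_eventuallyEq_const (hz k) k).eq_of_nhds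
  have hM1 : ∀ k, ∃ M, ∀ z, ‖pd k b z‖ ≤ M := fun k =>
    (hb.pd k).continuous.bounded_above_of_compact_support (hbc.pd k)
  choose M1 hM1 using hM1
  have hlc : HasCompactSupport (lap b) := by
    refine HasCompactSupport.of_support_subset_isCompact (isCompact_closedBall (0 : Euc n) 2) ?_
    intro z hz
    by_contra h
    simp only [Metric.mem_closedBall, dist_zero_right, not_le] at h
    exact hz (hlap0 z fun k => pd_eq_zero_of_eventuallyEq_const (hfar z h) k)
  obtain ⟨M2, hM2⟩ := hb.lap.continuous.bounded_above_of_compact_support hlc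
  have hM1n : ∀ k, 0 ≤ M1 k := fun k => (norm_nonneg _).trans (hM1 k 0)
  have hM2n : 0 ≤ M2 := (norm_nonneg _).trans (hM2 0)
  refine ⟨3 * (∑ k, M1 k) + 9 * M2 + 1, ?_, ?_⟩
  · have := Finset.sum_nonneg fun k (_ : k ∈ Finset.univ) => hM1n k
    positivity
  intro R hR
  have hR0 : 0 < R := by linarith
  have hpd : ∀ k, pd k (fun z => b (R⁻¹ • z)) = fun z => R⁻¹ * pd k b (R⁻¹ • z) :=
    fun k => funext fun z => pd_comp_smul b R⁻¹ k z
  have hlap : ∀ z, lap (fun z => b (R⁻¹ • z)) z = R⁻¹ * (R⁻¹ * lap b (R⁻¹ • z)) := by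
    intro z
    simp only [lap, Finset.mul_sum]
    refine Finset.sum_congr rfl fun k _ => ?_
    have hs : Sm fun z => pd k b (R⁻¹ • z) := (hb.pd k).comp (contDiff_const_smul R⁻¹)
    rw [hpd k, pd_const_mul hs, pd_comp_smul]
  have hnorm : ∀ z : Euc n, ‖R⁻¹ • z‖ = R⁻¹ * ‖z‖ := fun z => by
    rw [norm_smul, Real.norm_of_nonneg (by positivity)]
  have hjap : ∀ z : Euc n, ‖R⁻¹ • z‖ ≤ 2 → jap z ≤ 3 * R := by
    intro z hz
    rw [hnorm, inv_mul_le_iff₀ hR0] at hz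
    linarith [jap_le z]
  refine ⟨fun z => b (R⁻¹ • z), hb.comp (contDiff_const_smul R⁻¹),
    hbc.comp_smul (inv_ne_zero hR0.ne'), ?_, ?_, ?_, ?_, ?_, ?_⟩
  · intro z
    rw [abs_of_nonneg b.nonneg]; exact b.le_one
  · simp only [smul_zero]
    exact (hnear 0 (by simp)).eq_of_nhds
  · intro k z
    have hs : M1 k ≤ ∑ k, M1 k := Finset.single_le_sum (fun k _ => hM1n k) (Finset.mem_univ k)
    rcases le_or_gt ‖R⁻¹ • z‖ 2 with h | h
    · rw [hpd k, abs_mul, abs_of_pos (inv_pos.2 hR0)]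
      calc R⁻¹ * |pd k b (R⁻¹ • z)| * jap z ≤ R⁻¹ * M1 k * (3 * R) := by
            have := hM1 k (R⁻¹ • z)
            rw [Real.norm_eq_abs] at this
            have j1 := hjap z h
            have j2 := (jap_pos z).le
            have := hM1n k
            gcongr
        _ = 3 * M1 k := by field_simp
        _ ≤ _ := by linarith
    · rw [hpd k]
      have := (pd_eq_zero_of_eventuallyEq_const (hfar _ h) k).eq_of_nhds
      simp only [this]
      have := Finset.sum_nonneg fun k (_ : k ∈ Finset.univ) => hM1n k
      simp; positivity
  · intro z
    have := Finset.sum_nonneg fun k (_ : k ∈ Finset.univ) => hM1n k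
    rcases le_or_gt ‖R⁻¹ • z‖ 2 with h | h
    · rw [hlap, abs_mul, abs_mul, abs_of_pos (inv_pos.2 hR0)]
      calc R⁻¹ * (R⁻¹ * |lap b (R⁻¹ • z)|) * jap z ^ 2 ≤ R⁻¹ * (R⁻¹ * M2) * (3 * R) ^ 2 := by
            have := hM2 (R⁻¹ • z)
            rw [Real.norm_eq_abs] at this
            have j1 := hjap z h
            have j2 := (jap_pos z).le
            gcongr
        _ = 9 * M2 := by field_simp; norm_num
        _ ≤ _ := by linarith
    · rw [hlap, hlap0 _ fun k => pd_eq_zero_of_eventuallyEq_const (hfar _ h) k]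
      simp; positivity
  · intro k z hz
    have h1 : ‖R⁻¹ • z‖ < 1 := by rw [hnorm, inv_mul_lt_iff₀ hR0]; linarith
    rw [hpd k]
    simp only [(pd_eq_zero_of_eventuallyEq_const (hnear _ h1) k).eq_of_nhds, mul_zero]
  · intro z hz
    have h1 : ‖R⁻¹ • z‖ < 1 := by rw [hnorm, inv_mul_lt_iff₀ hR0]; linarith
    rw [hlap, hlap0 _ fun k => pd_eq_zero_of_eventuallyEq_const (hnear _ h1) k]
    simp

lemma tendsto_tail {H : Euc n → ℝ} (hH : Integrable H) :
    Tendsto (fun R : ℝ => ∫ z in {z : Euc n | R ≤ ‖z‖}, H z) atTop (𝓝 0) := by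
  have hm : ∀ R : ℝ, MeasurableSet {z : Euc n | R ≤ ‖z‖} := fun R =>
    measurableSet_le measurable_const measurable_norm
  have key : Tendsto (fun R : ℝ => ∫ z, {z : Euc n | R ≤ ‖z‖}.indicator H z) atTop
      (𝓝 (∫ _ : Euc n, (0 : ℝ))) := by
    refine tendsto_integral_filter_of_dominated_convergence (fun z => ‖H z‖) ?_ ?_ hH.norm ?_
    · exact Eventually.of_forall fun R => hH.1.indicator (hm R)
    · exact Eventually.of_forall fun R => Eventually.of_forall fun z =>
        norm_indicator_le_norm_self _ _
    · refine Eventually.of_forall fun z => tendsto_const_nhds.congr' ?_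
      filter_upwards [eventually_gt_atTop ‖z‖] with R hR
      rw [Set.indicator_of_notMem]
      simpa using hR
  simp only [integral_zero] at key
  refine key.congr fun R => integral_indicator (hm R)

lemma kb_le_jap (hn : 3 ≤ n) (ε : ℝ) {z : Euc n} (hz : 1 ≤ ‖z‖) :
    kb ε z ≤ 2 ^ (n : ℝ) * jap z ^ (1 - (n : ℝ)) := by
  have h3 : (3 : ℝ) ≤ n := by exact_mod_cast hn
  have hz0 : z ≠ 0 := by rintro rfl; norm_num at hz
  have h1 : jap z / 2 ≤ ‖z‖ := by linarith [jap_le z]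
  have hj := jap_pos z
  calc kb ε z ≤ ‖z‖ ^ (1 - (n : ℝ)) := kb_le_norm hn ε hz0
    _ ≤ (jap z / 2) ^ (1 - (n : ℝ)) :=
      Real.rpow_le_rpow_of_nonpos (by positivity) h1 (by linarith)
    _ = 2 ^ ((n : ℝ) - 1) * jap z ^ (1 - (n : ℝ)) := by
      rw [Real.div_rpow hj.le (by norm_num), div_eq_mul_inv, ← Real.rpow_neg (by norm_num)]
      rw [show -(1 - (n : ℝ)) = n - 1 by ring]; ring
    _ ≤ _ := by
      refine mul_le_mul_of_nonneg_right ?_ (jap_rpow_pos _ z).le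
      exact Real.rpow_le_rpow_of_exponent_le (by norm_num) (by linarith)

end Cutoff

/-! ### Gradient bound at the origin for the scalar equation -/

section Scalar
variable {n : ℕ}

/-- Size of the terms produced by differentiating the cutoff. -/
def errDensity (u : Euc n → ℝ) (z : Euc n) : ℝ :=
  jap z ^ (-(n : ℝ) - 1) * |u z| + 2 * ∑ k, jap z ^ (-(n : ℝ)) * |pd k u z|

/-- The cut-off, regularised version of the representation of `∂ᵢu(0)`: the left side tends to a
multiple of `∂ᵢ(uχ)(0)` as `ε → 0`, and on the right the derivative in `div f` has been moved onto
the kernel, leaving only `f` itself and terms supported where `χ` varies. -/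
lemma cutoff_identity (hn : 3 ≤ n) {u χ : Euc n → ℝ} {f : Euc n → Euc n} {c : ℝ} {j : Fin n}
    (hu : Sm u) (hχ : Sm χ) (hχc : HasCompactSupport χ) (hf : ContDiff ℝ (⊤ : ℕ∞) f)
    (heq : ∀ x, lap u x = -f x j - c * (x j * divg f x)) {ε : ℝ} (hε : 0 < ε) (i : Fin n) :
    n * ∫ z, pd i (fun y => u y * χ y) z * (ε ^ 2 * regPow ε (-(n : ℝ) / 2 - 1) z)
      = (∫ z, χ z * (gk ε i z * f z j))
        - c * (∑ k, ∫ z, pd k (fun y => χ y * (y j * gk ε i y)) z * f z k)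
        - ∫ z, (u z * lap χ z + 2 * ∑ k, pd k u z * pd k χ z) * gk ε i z := by
  have h3 : (3 : ℝ) ≤ n := by exact_mod_cast hn
  have hv : Sm fun y => u y * χ y := hu.mul hχ
  have hvc : HasCompactSupport fun y => u y * χ y := hχc.mul_left
  have hg := sm_gk hε i
  have hw : Sm fun y : Euc n => χ y * (y j * gk ε i y) := hχ.mul ((sm_coord j).mul hg)
  have hwc : HasCompactSupport fun y : Euc n => χ y * (y j * gk ε i y) := hχc.mul_right
  have hfk := fun k => Sm.comp_coord hf k
  have h1 := green hv (sm_Gam hε) hvc i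
  simp only [lap_Gam hε, pd_Gam hε] at h1
  have a1 : (2 - (n : ℝ)) *
      (n * ∫ z, pd i (fun y => u y * χ y) z * (ε ^ 2 * regPow ε (-(n : ℝ) / 2 - 1) z))
      = (2 - (n : ℝ)) * -∫ z, lap (fun y => u y * χ y) z * gk ε i z := by
    calc _ = ∫ z, pd i (fun y => u y * χ y) z *
          ((2 - (n : ℝ)) * n * (ε ^ 2 * regPow ε (-(n : ℝ) / 2 - 1) z)) := by
          rw [← mul_assoc, ← integral_const_mul]
          congr 1; funext z; ring
      _ = _ := by
          rw [h1, mul_neg, ← integral_const_mul]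
          congr 2; funext z; ring
  rw [mul_left_cancel₀ (by linarith) a1]
  have i1 : Integrable fun z => χ z * (gk ε i z * f z j) :=
    integrable_cs hχ.continuous (hg.continuous.mul (hfk j).continuous) hχc
  have i2 : ∀ k, Integrable fun z : Euc n =>
      (χ z * (z j * gk ε i z)) * pd k (fun y => f y k) z := fun k =>
    integrable_cs hw.continuous ((hfk k).pd k).continuous hwc
  have i3 : Integrable fun z => (u z * lap χ z + 2 * ∑ k, pd k u z * pd k χ z) * gk ε i z := by
    have : (fun z => (u z * lap χ z + 2 * ∑ k, pd k u z * pd k χ z) * gk ε i z)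
        = fun z => ∑ k, (pd k (pd k χ) z * (u z * gk ε i z)
            + pd k χ z * (2 * pd k u z * gk ε i z)) := by
      funext z
      simp only [lap, Finset.mul_sum, Finset.sum_mul, add_mul, Finset.sum_add_distrib]
      congr 1 <;> exact Finset.sum_congr rfl fun k _ => by ring
    rw [this]
    refine integrable_finsetSum _ fun k _ => Integrable.add ?_ ?_
    · exact integrable_cs ((hχ.pd k).pd k).continuous (hu.continuous.mul hg.continuous)
        ((hχc.pd k).pd k)
    · exact integrable_cs (hχ.pd k).continuous
        ((continuous_const.mul (hu.pd k).continuous).mul hg.continuous) (hχc.pd k)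
  have e : ∀ z, lap (fun y => u y * χ y) z * gk ε i z
      = (u z * lap χ z + 2 * ∑ k, pd k u z * pd k χ z) * gk ε i z
        - χ z * (gk ε i z * f z j)
        - c * ∑ k, (χ z * (z j * gk ε i z)) * pd k (fun y => f y k) z := by
    intro z
    rw [lap_mul hu hχ, heq, divg, ← Finset.mul_sum]
    ring
  simp only [e]
  have i4 := (integrable_finsetSum Finset.univ fun k _ => i2 k).const_mul c
  have i5 : Integrable fun z => (u z * lap χ z + 2 * ∑ k, pd k u z * pd k χ z) * gk ε i z
      - χ z * (gk ε i z * f z j) := i3.sub i1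
  rw [integral_sub i5 i4, integral_sub i3 i1, integral_const_mul, integral_finsetSum _ fun k _ => i2 k]
  have : ∀ k, ∫ z, (χ z * (z j * gk ε i z)) * pd k (fun y => f y k) z
      = -∫ z, pd k (fun y => χ y * (y j * gk ε i y)) z * f z k := fun k =>
    ibp hw (hfk k) hwc k
  simp only [this, Finset.sum_neg_distrib]
  ring

lemma abs_integral_le_of_dominated {F G : Euc n → ℝ} {A : ℝ} (hG : Integrable G)
    (h : ∀ z, |F z| ≤ G z) (hA : ∫ z, G z ≤ A) : |∫ z, F z| ≤ A := by
  have := norm_integral_le_of_norm_le (f := F) hG (Eventually.of_forall h)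
  rw [Real.norm_eq_abs] at this
  exact this.trans hA

/-- If `Δu = -f_j - c y_j div f`, and `u` and `∇u` grow slowly enough for the cutoff to be
removable, then `|∇u(0)|` is controlled by `∫ ‖z‖^(1-n) |f|`, here expressed through the
regularised weights `kb ε`. -/
lemma scalar_bound (hn : 3 ≤ n) : ∃ K > (0 : ℝ), ∀ (u : Euc n → ℝ) (f : Euc n → Euc n)
    (c : ℝ) (j : Fin n) (A : ℝ), Sm u → ContDiff ℝ (⊤ : ℕ∞) f → |c| ≤ 1 →
    (∀ x, lap u x = -f x j - c * (x j * divg f x)) →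
    Integrable (errDensity u) →
    (∀ ε > 0, Integrable fun z => kb ε z * ‖f z‖) →
    (∀ ε > 0, ∫ z, kb ε z * ‖f z‖ ≤ A) →
    ∀ i, |pd i u 0| ≤ K * A := by
  have h3 : (3 : ℝ) ≤ n := by exact_mod_cast hn
  obtain ⟨M, hM, hcut⟩ := exists_cutoff n
  have hmass := mass_pos (n := n)
  refine ⟨(1 + n * (n + 2 + M)) / (n * mass n), by positivity, ?_⟩
  intro u f c j A hu hf hc heq herr hInt hA i
  have hA0 : 0 ≤ A := (integral_nonneg fun z =>
    mul_nonneg (kb_pos one_pos z).le (norm_nonneg _)).trans (hA 1 one_pos)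
  set T : ℝ → ℝ := fun R => ∫ z in {z : Euc n | R ≤ ‖z‖}, errDensity u z with hT
  have main : ∀ R : ℝ, 1 ≤ R →
      n * (mass n * |pd i u 0|) ≤ (1 + n * (n + 2 + M)) * A + 2 ^ (n : ℝ) * M * T R := by
    intro R hR
    obtain ⟨χ, hχ, hχc, hχ1, hχ0, hd1, hd2, hz1, hz2⟩ := hcut R hR
    have hv : Sm fun y => u y * χ y := hu.mul hχ
    have hvc : HasCompactSupport fun y => u y * χ y := hχc.mul_left
    have hlim := (tendsto_approx (hv.pd i).continuous (hvc.pd i)).const_mul (n : ℝ)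
    have hpd0 : pd i (fun y => u y * χ y) 0 = pd i u 0 := by
      rw [pd_mul hu hχ, hχ0, hz1 i 0 (by simp; linarith)]; ring
    rw [hpd0] at hlim
    have hbd : ∀ᶠ ε : ℝ in 𝓝[>] 0, |n * ∫ z, pd i (fun y => u y * χ y) z *
        (ε ^ 2 * regPow ε (-(n : ℝ) / 2 - 1) z)|
        ≤ (1 + n * (n + 2 + M)) * A + 2 ^ (n : ℝ) * M * T R := by
      filter_upwards [self_mem_nhdsWithin] with ε hε
      have hε : 0 < ε := hε
      rw [cutoff_identity hn hu hχ hχc hf heq hε i]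
      have hfk : ∀ z k, |f z k| ≤ ‖f z‖ := fun z k => PiLp.norm_apply_le (f z) k
      have b1 : |∫ z, χ z * (gk ε i z * f z j)| ≤ A := by
        refine abs_integral_le_of_dominated (hInt ε hε) (fun z => ?_) (hA ε hε)
        rw [abs_mul, abs_mul]
        calc |χ z| * (|gk ε i z| * |f z j|) ≤ 1 * (kb ε z * ‖f z‖) := by
              have := kb_pos hε z
              gcongr
              · exact hχ1 z
              · exact abs_gk_le hε i z
              · exact hfk z j
          _ = _ := one_mul _
      have b2 : ∀ k, |∫ z, pd k (fun y => χ y * (y j * gk ε i y)) z * f z k|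
          ≤ (n + 2 + M) * A := by
        intro k
        refine abs_integral_le_of_dominated ((hInt ε hε).const_mul (n + 2 + M)) (fun z => ?_) ?_
        · rw [pd_mul hχ ((sm_coord j).mul (sm_gk hε i)), abs_mul,
            ← mul_assoc (n + 2 + M : ℝ)]
          refine mul_le_mul ?_ (hfk z k) (abs_nonneg _)
            (mul_nonneg (by positivity) (kb_pos hε z).le)
          have kp := kb_pos hε z
          have t1 : |χ z * pd k (fun y => y j * gk ε i y) z| ≤ (n + 2) * kb ε z := by
            rw [abs_mul]
            calc _ ≤ 1 * ((n + 2) * kb ε z) := by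
                  gcongr
                  · exact hχ1 z
                  · exact abs_pd_gk_mul_le hε i j k z
              _ = _ := one_mul _
          have t2 : |pd k χ z * (z j * gk ε i z)| ≤ M * kb ε z := by
            rw [abs_mul, abs_mul, ← mul_assoc]
            refine mul_le_mul ?_ (abs_gk_le hε i z) (abs_nonneg _) hM.le
            refine le_trans ?_ (hd1 k z)
            gcongr
            exact (PiLp.norm_apply_le z j).trans (norm_le_jap z)
          calc _ ≤ (n + 2) * kb ε z + M * kb ε z :=
                (abs_add_le _ _).trans (add_le_add t1 t2)
            _ = _ := by ring
        · rw [integral_const_mul]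
          exact mul_le_mul_of_nonneg_left (hA ε hε) (by positivity)
      have b3 : |∫ z, (u z * lap χ z + 2 * ∑ k, pd k u z * pd k χ z) * gk ε i z|
          ≤ 2 ^ (n : ℝ) * M * T R := by
        have hms : MeasurableSet {z : Euc n | R ≤ ‖z‖} :=
          measurableSet_le measurable_const measurable_norm
        refine abs_integral_le_of_dominated
          (G := {z : Euc n | R ≤ ‖z‖}.indicator fun z => 2 ^ (n : ℝ) * M * errDensity u z)
          ((herr.const_mul _).indicator hms) (fun z => ?_) ?_
        · by_cases hz : R ≤ ‖z‖
          · rw [Set.indicator_of_mem (by exact hz)]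
            have hj := jap_pos z
            have hk := kb_le_jap hn ε (hR.trans hz)
            have hg := (abs_gk_le hε i z).trans hk
            have q1 : |u z * lap χ z| * |gk ε i z|
                ≤ 2 ^ (n : ℝ) * M * (jap z ^ (-(n : ℝ) - 1) * |u z|) := by
              have hl : |lap χ z| ≤ M * jap z ^ (-2 : ℝ) := by
                rw [Real.rpow_neg hj.le, ← div_eq_mul_inv, le_div_iff₀ (by positivity)]
                simpa using hd2 z
              rw [abs_mul]
              calc |u z| * |lap χ z| * |gk ε i z|
                  ≤ |u z| * (M * jap z ^ (-2 : ℝ)) * (2 ^ (n : ℝ) * jap z ^ (1 - (n : ℝ))) := by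
                    gcongr
                _ = 2 ^ (n : ℝ) * M * ((jap z ^ (-2 : ℝ) * jap z ^ (1 - (n : ℝ))) * |u z|) := by
                    ring
                _ = _ := by
                    rw [← Real.rpow_add hj, show (-2 : ℝ) + (1 - n) = -n - 1 by ring]
            have q2 : ∀ k, |pd k u z * pd k χ z| * |gk ε i z|
                ≤ 2 ^ (n : ℝ) * M * (jap z ^ (-(n : ℝ)) * |pd k u z|) := by
              intro k
              have hl : |pd k χ z| ≤ M * jap z ^ (-1 : ℝ) := by
                rw [Real.rpow_neg hj.le, ← div_eq_mul_inv, le_div_iff₀ (by positivity)]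
                simpa using hd1 k z
              rw [abs_mul]
              calc |pd k u z| * |pd k χ z| * |gk ε i z|
                  ≤ |pd k u z| * (M * jap z ^ (-1 : ℝ))
                      * (2 ^ (n : ℝ) * jap z ^ (1 - (n : ℝ))) := by
                    gcongr
                _ = 2 ^ (n : ℝ) * M *
                      ((jap z ^ (-1 : ℝ) * jap z ^ (1 - (n : ℝ))) * |pd k u z|) := by
                    ring
                _ = _ := by
                    rw [← Real.rpow_add hj, show (-1 : ℝ) + (1 - n) = -n by ring]
            rw [abs_mul]
            calc _ ≤ (|u z * lap χ z| + 2 * ∑ k, |pd k u z * pd k χ z|) * |gk ε i z| := by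
                  gcongr
                  refine (abs_add_le _ _).trans ?_
                  rw [abs_mul 2, abs_two]
                  gcongr
                  exact Finset.abs_sum_le_sum_abs _ _
              _ = |u z * lap χ z| * |gk ε i z|
                  + 2 * ∑ k, |pd k u z * pd k χ z| * |gk ε i z| := by
                  rw [add_mul, mul_assoc, Finset.sum_mul]
              _ ≤ 2 ^ (n : ℝ) * M * (jap z ^ (-(n : ℝ) - 1) * |u z|)
                  + 2 * ∑ k, 2 ^ (n : ℝ) * M * (jap z ^ (-(n : ℝ)) * |pd k u z|) := by
                  refine add_le_add q1 (mul_le_mul_of_nonneg_left ?_ zero_le_two)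
                  exact Finset.sum_le_sum fun k _ => q2 k
              _ = _ := by
                  rw [errDensity, ← Finset.mul_sum]; ring
          · rw [Set.indicator_of_notMem (by exact hz)]
            push Not at hz
            simp [hz2 z hz, fun k => hz1 k z hz]
        · rw [integral_indicator hms, integral_const_mul]
      have hsum : |∑ k, ∫ z, pd k (fun y => χ y * (y j * gk ε i y)) z * f z k|
          ≤ n * ((n + 2 + M) * A) := by
        refine (Finset.abs_sum_le_sum_abs _ _).trans ?_
        refine (Finset.sum_le_sum fun k _ => b2 k).trans ?_
        simp
      have hcs : |c * ∑ k, ∫ z, pd k (fun y => χ y * (y j * gk ε i y)) z * f z k|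
          ≤ n * ((n + 2 + M) * A) := by
        rw [abs_mul]
        calc _ ≤ 1 * (n * ((n + 2 + M) * A)) := by gcongr
          _ = _ := one_mul _
      calc _ ≤ A + n * ((n + 2 + M) * A) + 2 ^ (n : ℝ) * M * T R :=
            (abs_sub _ _).trans (add_le_add ((abs_sub _ _).trans (add_le_add b1 hcs)) b3)
        _ = _ := by ring
    -- The right-hand side does not depend on `ε`, so `ε → 0` recovers `∂ᵢu(0)`.
    have := le_of_tendsto hlim.abs hbd
    rwa [abs_mul, abs_mul, Nat.abs_cast, abs_of_pos hmass, mul_comm |pd i u 0|] at this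
  have hTlim : Tendsto (fun R => (1 + n * (n + 2 + M)) * A + 2 ^ (n : ℝ) * M * T R) atTop
      (𝓝 ((1 + n * (n + 2 + M)) * A + 2 ^ (n : ℝ) * M * 0)) :=
    ((tendsto_tail herr).const_mul _).const_add _
  have hfin := ge_of_tendsto hTlim ((eventually_ge_atTop 1).mono main)
  rw [mul_zero, add_zero] at hfin
  rw [div_mul_eq_mul_div, le_div_iff₀ (by positivity)]
  linarith

end Scalar

/-! ### Reduction of the vector equation to scalar equations -/

section Vector
variable {n : ℕ}

/-- The vector equation in components: `ΔW_j + (1 - 2/n) ∂_j div W = -f_j`. -/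
lemma vecLap_component {W f : Euc n → Euc n} (hW : ContDiff ℝ (⊤ : ℕ∞) W)
    (heq : ∀ x, vecLap W x = f x) (j : Fin n) (x : Euc n) :
    lap (fun y => W y j) x + (1 - 2 / (n : ℝ)) * pd j (divg W) x = -f x j := by
  have hWk := fun k => Sm.comp_coord hW k
  have hd := sm_divg hW
  have h1 : f x j = -∑ i, pd i (fun y => confKill W y i j) x := by
    rw [← heq x]; simp [vecLap]
  have h2 : ∀ i, pd i (fun y => confKill W y i j) x
      = pd i (pd i fun y => W y j) x + pd j (pd i fun y => W y i) x
        + (if i = j then -(2 / (n : ℝ)) * pd i (divg W) x else 0) := by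
    intro i
    have e : (fun y => confKill W y i j) = fun y => (pd i (fun y => W y j) y
        + pd j (fun y => W y i) y) + (-(2 / (n : ℝ)) * (if i = j then 1 else 0)) * divg W y := by
      funext y; simp only [confKill, Matrix.of_apply]; ring
    rw [e, pd_add (((hWk j).pd i).add ((hWk i).pd j)) (contDiff_const.mul hd),
      pd_add ((hWk j).pd i) ((hWk i).pd j), pd_const_mul hd, pd_comm (hWk i) i j]
    split_ifs <;> simp
  have h3 : pd j (divg W) x = ∑ i, pd j (pd i fun y => W y i) x := by
    unfold divg
    exact pd_sum _ (fun i => (hWk i).pd i) j x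
  rw [h1]
  simp only [h2, Finset.sum_add_distrib]
  rw [← h3]
  simp only [Finset.sum_ite_eq', Finset.mem_univ, if_true]
  rw [show ∑ i, pd i (pd i fun y => W y j) x = lap (fun y => W y j) x from rfl]
  ring

lemma lap_divg {W f : Euc n → Euc n} (hW : ContDiff ℝ (⊤ : ℕ∞) W)
    (hf : ContDiff ℝ (⊤ : ℕ∞) f) (heq : ∀ x, vecLap W x = f x) (x : Euc n) :
    (2 - 2 / (n : ℝ)) * lap (divg W) x = -divg f x := by
  have hWk := fun k => Sm.comp_coord hW k
  have hd := sm_divg hW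
  have h1 : ∀ j, pd j (lap fun y => W y j) x + (1 - 2 / (n : ℝ)) * pd j (pd j (divg W)) x
      = -pd j (fun y => f y j) x := by
    intro j
    have e : (fun y => lap (fun y => W y j) y + (1 - 2 / (n : ℝ)) * pd j (divg W) y)
        = fun y => (-1) * f y j := by
      funext y; rw [vecLap_component hW heq]; ring
    have := congrArg (fun g => pd j g x) e
    simp only at this
    rw [pd_add (hWk j).lap (contDiff_const.mul (hd.pd j)), pd_const_mul (hd.pd j),
      pd_const_mul (Sm.comp_coord hf j)] at this
    rw [this]; ring
  have h2 : lap (divg W) x = ∑ j, pd j (lap fun y => W y j) x := by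
    simp only [fun j => pd_lap (hWk j) j x]
    unfold lap divg
    rw [Finset.sum_comm]
    refine Finset.sum_congr rfl fun k _ => ?_
    rw [← pd_sum _ fun j => ((hWk j).pd j).pd k]
    congr 1
    funext y
    exact pd_sum _ (fun j => (hWk j).pd j) k y
  have h3 := Finset.sum_congr (rfl : (Finset.univ : Finset (Fin n)) = _) fun j _ => h1 j
  rw [Finset.sum_add_distrib, ← h2, ← Finset.mul_sum, Finset.sum_neg_distrib] at h3
  rw [divg, ← h3]
  change _ = _ + _ * lap (divg W) x
  ring

/-- The potential `W_j + ½(1 - 2/n) y_j div W`. Adding the second term removes `∂_j div W` from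
the equation, leaving a scalar Poisson equation, and it changes the gradient at the origin only by
a multiple of the identity, which the conformal Killing operator does not see. -/
def potential (W : Euc n → Euc n) (j : Fin n) (y : Euc n) : ℝ :=
  W y j + ((1 - 2 / (n : ℝ)) / 2) * (y j * divg W y)

lemma sm_potential {W : Euc n → Euc n} (hW : ContDiff ℝ (⊤ : ℕ∞) W) (j : Fin n) :
    Sm (potential W j) :=
  (Sm.comp_coord hW j).add (contDiff_const.mul ((sm_coord j).mul (sm_divg hW)))

lemma lap_potential (hn : 3 ≤ n) {W f : Euc n → Euc n} (hW : ContDiff ℝ (⊤ : ℕ∞) W)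
    (hf : ContDiff ℝ (⊤ : ℕ∞) f) (heq : ∀ x, vecLap W x = f x) (j : Fin n) (x : Euc n) :
    lap (potential W j) x
      = -f x j - ((1 - 2 / (n : ℝ)) / 2 / (2 - 2 / (n : ℝ))) * (x j * divg f x) := by
  have h3 : (3 : ℝ) ≤ n := by exact_mod_cast hn
  have hq : 2 / (n : ℝ) < 1 := by rw [div_lt_one (by linarith)]; linarith
  have h2 : (2 - 2 / (n : ℝ)) ≠ 0 := by linarith
  have hd := sm_divg hW
  have hdf : divg f x = -((2 - 2 / (n : ℝ)) * lap (divg W) x) := by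
    rw [lap_divg hW hf heq]; ring
  unfold potential
  rw [lap_add (Sm.comp_coord hW j) (contDiff_const.mul ((sm_coord j).mul hd)),
    lap_const_mul ((sm_coord j).mul hd), lap_coord_mul hd, hdf]
  have := vecLap_component hW heq j x
  generalize 2 / (n : ℝ) = t at *
  field_simp
  linear_combination 2 * this

lemma pd_potential {W : Euc n → Euc n} (hW : ContDiff ℝ (⊤ : ℕ∞) W) (j k : Fin n) (x : Euc n) :
    pd k (potential W j) x = pd k (fun y => W y j) x + ((1 - 2 / (n : ℝ)) / 2) *
      (x j * pd k (divg W) x + (if k = j then 1 else 0) * divg W x) := by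
  have hd := sm_divg hW
  unfold potential
  rw [pd_add (Sm.comp_coord hW j) (contDiff_const.mul ((sm_coord j).mul hd)),
    pd_const_mul ((sm_coord j).mul hd), pd_mul (sm_coord j) hd, pd_coord]

/-- At the origin `W` and its potentials have the same conformal Killing derivative. -/
lemma confKill_eq_potential (hn : 3 ≤ n) {W : Euc n → Euc n} (hW : ContDiff ℝ (⊤ : ℕ∞) W)
    (i j : Fin n) :
    confKill W 0 i j = pd i (potential W j) 0 + pd j (potential W i) 0
      - (2 / (n : ℝ)) * (∑ k, pd k (potential W k) 0) * (if i = j then 1 else 0) := by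
  have h3 : (3 : ℝ) ≤ n := by exact_mod_cast hn
  have hn0 : (n : ℝ) ≠ 0 := by linarith
  simp only [pd_potential hW, confKill, Matrix.of_apply]
  simp only [PiLp.zero_apply, zero_mul, zero_add, if_true, one_mul, Finset.sum_add_distrib,
    Finset.sum_const, Finset.card_univ, Fintype.card_fin, nsmul_eq_mul]
  change _ = _ - 2 / (n : ℝ) * (divg W 0 + _) * _
  by_cases h : i = j
  · subst h
    simp
    field_simp
    ring
  · simp [h, Ne.symm h]

lemma abs_divg_le (W : Euc n → Euc n) (z : Euc n) :
    |divg W z| ≤ ∑ i, |pd i (fun y => W y i) z| := Finset.abs_sum_le_sum_abs _ _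

lemma integrable_errDensity (hn : 3 ≤ n) {W : Euc n → Euc n} (hW : ContDiff ℝ (⊤ : ℕ∞) W)
    (h0 : ∀ j, Integrable fun z => jap z ^ (-(n : ℝ) - 1) * |W z j|)
    (h1 : ∀ i j, Integrable fun z => jap z ^ (-(n : ℝ)) * |pd i (fun y => W y j) z|)
    (h2 : ∀ k i j, Integrable fun z => jap z ^ (1 - (n : ℝ)) * |pd k (pd i fun y => W y j) z|)
    (j : Fin n) : Integrable (errDensity (potential W j)) := by
  have h3 : (3 : ℝ) ≤ n := by exact_mod_cast hn
  have hq : 2 / (n : ℝ) < 1 := by rw [div_lt_one (by linarith)]; linarith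
  have hq0 : 0 < 2 / (n : ℝ) := by positivity
  have hu := sm_potential hW j
  have hκ : |(1 - 2 / (n : ℝ)) / 2| ≤ 1 := by rw [abs_le]; constructor <;> linarith
  have hWk := fun k => Sm.comp_coord hW k
  have hzj : ∀ z : Euc n, |z j| ≤ jap z := fun z =>
    (PiLp.norm_apply_le z j).trans (norm_le_jap z)
  have s1 : ∀ z : Euc n, jap z ^ (-(n : ℝ)) = jap z ^ (-(n : ℝ) - 1) * jap z := fun z => by
    rw [← Real.rpow_add_one (jap_pos z).ne']; congr 1; ring
  have s2 : ∀ z : Euc n, jap z ^ (1 - (n : ℝ)) = jap z ^ (-(n : ℝ)) * jap z := fun z => by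
    rw [← Real.rpow_add_one (jap_pos z).ne']; congr 1; ring
  have hi1 : Integrable fun z => jap z ^ (-(n : ℝ) - 1) * |potential W j z| := by
    refine ((h0 j).add (integrable_finsetSum Finset.univ fun i _ => h1 i i)).mono'
      ((continuous_jap_rpow _).mul hu.continuous.abs).aestronglyMeasurable
      (Eventually.of_forall fun z => ?_)
    have hp := jap_rpow_pos (-(n : ℝ) - 1) z
    have hj := jap_pos z
    rw [Real.norm_of_nonneg (by positivity)]
    have hb : |potential W j z| ≤ |W z j| + jap z * ∑ i, |pd i (fun y => W y i) z| := by
      unfold potential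
      refine (abs_add_le _ _).trans (add_le_add le_rfl ?_)
      rw [abs_mul, abs_mul]
      calc _ ≤ 1 * (jap z * ∑ i, |pd i (fun y => W y i) z|) := by
            gcongr
            · exact hzj z
            · exact abs_divg_le W z
        _ = _ := one_mul _
    calc _ ≤ jap z ^ (-(n : ℝ) - 1) * (|W z j| + jap z * ∑ i, |pd i (fun y => W y i) z|) := by
          gcongr
      _ = _ := by
          simp only [Pi.add_apply, ← Finset.mul_sum, s1]; ring
  have hi2 : ∀ k, Integrable fun z => jap z ^ (-(n : ℝ)) * |pd k (potential W j) z| := by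
    intro k
    refine (((h1 k j).add (integrable_finsetSum Finset.univ fun i _ => h2 k i i)).add
      (integrable_finsetSum Finset.univ fun i _ => h1 i i)).mono'
      ((continuous_jap_rpow _).mul (hu.pd k).continuous.abs).aestronglyMeasurable
      (Eventually.of_forall fun z => ?_)
    have hp := jap_rpow_pos (-(n : ℝ)) z
    have hj := jap_pos z
    rw [Real.norm_of_nonneg (by positivity), pd_potential hW]
    have hdk : |pd k (divg W) z| ≤ ∑ i, |pd k (pd i fun y => W y i) z| := by
      have : pd k (divg W) z = ∑ i, pd k (pd i fun y => W y i) z := by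
        unfold divg
        exact pd_sum _ (fun i => (hWk i).pd i) k z
      rw [this]
      exact Finset.abs_sum_le_sum_abs _ _
    have hb : |pd k (fun y => W y j) z + ((1 - 2 / (n : ℝ)) / 2) *
      (z j * pd k (divg W) z + (if k = j then 1 else 0) * divg W z)|
        ≤ |pd k (fun y => W y j) z| + (jap z * (∑ i, |pd k (pd i fun y => W y i) z|)
          + ∑ i, |pd i (fun y => W y i) z|) := by
      refine (abs_add_le _ _).trans (add_le_add le_rfl ?_)
      rw [abs_mul]
      refine (mul_le_mul hκ ((abs_add_le _ _).trans (add_le_add ?_ ?_)) (abs_nonneg _)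
        zero_le_one).trans_eq (one_mul _)
      · rw [abs_mul]
        gcongr
        exact hzj z
      · refine le_trans ?_ (abs_divg_le W z)
        split_ifs <;> simp
    calc _ ≤ jap z ^ (-(n : ℝ)) * (|pd k (fun y => W y j) z|
          + (jap z * (∑ i, |pd k (pd i fun y => W y i) z|)
          + ∑ i, |pd i (fun y => W y i) z|)) := by gcongr
      _ = _ := by
          simp only [Pi.add_apply, ← Finset.mul_sum, s2]; ring
  exact hi1.add ((integrable_finsetSum Finset.univ fun k _ => hi2 k).const_mul 2)

lemma frob_le {M : Matrix (Fin n) (Fin n) ℝ} {B : ℝ} (hB : 0 ≤ B) (h : ∀ i j, |M i j| ≤ B) :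
    frob M ≤ n * B := by
  rw [frob, Real.sqrt_le_left (by positivity)]
  have : ∀ i j, M i j ^ 2 ≤ B ^ 2 := fun i j => sq_le_sq' (abs_le.1 (h i j)).1 (abs_le.1 (h i j)).2
  calc _ ≤ ∑ _i : Fin n, ∑ _j : Fin n, B ^ 2 :=
        Finset.sum_le_sum fun i _ => Finset.sum_le_sum fun j _ => this i j
    _ = _ := by simp; ring

/-- Bound on `𝒟W` at the origin by `∫ ‖z‖^(1-n) |f|`, which enters through the regularised weights
`kb ε`. -/
lemma vector_bound (hn : 3 ≤ n) : ∃ K > (0 : ℝ), ∀ (f W : Euc n → Euc n) (A : ℝ),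
    ContDiff ℝ (⊤ : ℕ∞) f → ContDiff ℝ (⊤ : ℕ∞) W → (∀ x, vecLap W x = f x) →
    (∀ j, Integrable fun z => jap z ^ (-(n : ℝ) - 1) * |W z j|) →
    (∀ i j, Integrable fun z => jap z ^ (-(n : ℝ)) * |pd i (fun y => W y j) z|) →
    (∀ k i j, Integrable fun z => jap z ^ (1 - (n : ℝ)) * |pd k (pd i fun y => W y j) z|) →
    (∀ ε > 0, Integrable fun z => kb ε z * ‖f z‖) →
    (∀ ε > 0, ∫ z, kb ε z * ‖f z‖ ≤ A) →
    frob (confKill W 0) ≤ K * A := by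
  have h3 : (3 : ℝ) ≤ n := by exact_mod_cast hn
  have hq : 2 / (n : ℝ) < 1 := by rw [div_lt_one (by linarith)]; linarith
  have hq0 : 0 < 2 / (n : ℝ) := by positivity
  obtain ⟨K, hK, hb⟩ := scalar_bound hn
  refine ⟨n * (4 * K), by positivity, ?_⟩
  intro f W A hf hW heq h0 h1 h2 hi hA
  have hA0 : 0 ≤ A := (integral_nonneg fun z =>
    mul_nonneg (kb_pos one_pos z).le (norm_nonneg _)).trans (hA 1 one_pos)
  have key : ∀ i j, |pd i (potential W j) 0| ≤ K * A := by
    intro i j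
    refine hb (potential W j) f ((1 - 2 / (n : ℝ)) / 2 / (2 - 2 / (n : ℝ))) j A
      (sm_potential hW j) hf ?_ (lap_potential hn hW hf heq j)
      (integrable_errDensity hn hW h0 h1 h2 j) hi hA i
    rw [abs_of_nonneg (div_nonneg (by linarith) (by linarith)), div_le_one (by linarith)]
    linarith
  rw [mul_assoc]
  refine frob_le (by positivity) fun i j => ?_
  rw [confKill_eq_potential hn hW]
  have hs : |∑ k, pd k (potential W k) 0| ≤ n * (K * A) := by
    refine (Finset.abs_sum_le_sum_abs _ _).trans ((Finset.sum_le_sum fun k _ => key k k).trans ?_)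
    simp
  have ht : |2 / (n : ℝ) * (∑ k, pd k (potential W k) 0) * (if i = j then 1 else 0)|
      ≤ 2 * (K * A) := by
    have : |2 / (n : ℝ) * (∑ k, pd k (potential W k) 0)| ≤ 2 * (K * A) := by
      rw [abs_mul, abs_of_pos hq0]
      calc _ ≤ 2 / (n : ℝ) * (n * (K * A)) := by gcongr
        _ = _ := by field_simp
    split_ifs
    · simpa using this
    · simp; positivity
  calc _ ≤ K * A + K * A + 2 * (K * A) := (abs_sub _ _).trans
        (add_le_add ((abs_add_le _ _).trans (add_le_add (key i j) (key j i))) ht)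
    _ = _ := by ring

end Vector

/-! ### The weighted Riesz-type integral -/

section Riesz
variable {n : ℕ}

lemma jap_lipschitz (x y : Euc n) : jap x ≤ jap y + ‖y - x‖ := by
  have h1 : ‖x‖ ≤ ‖y‖ + ‖y - x‖ := by
    have := norm_sub_norm_le x y
    rw [norm_sub_rev] at this
    linarith
  have hy := norm_le_jap y
  have hyp := jap_pos y
  have hsq : jap y ^ 2 = 1 + ‖y‖ ^ 2 := Real.sq_sqrt (by positivity)
  rw [show jap x = Real.sqrt (1 + ‖x‖ ^ 2) from rfl, Real.sqrt_le_left (by positivity)]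
  nlinarith [norm_nonneg x, norm_nonneg y, norm_nonneg (y - x),
    mul_le_mul_of_nonneg_right hy (norm_nonneg (y - x)),
    pow_le_pow_left₀ (norm_nonneg x) h1 2]

/-- `t^(-a)` truncated to `t < 1`. -/
def nearPow (a t : ℝ) : ℝ := if t < 1 then t ^ (-a) else 0

/-- `t^(-c)` truncated to `t ≥ 1/2`. -/
def farPow (c t : ℝ) : ℝ := if 1 / 2 ≤ t then t ^ (-c) else 0

lemma nearPow_nonneg (a : ℝ) {t : ℝ} (ht : 0 ≤ t) : 0 ≤ nearPow a t := by
  unfold nearPow; split_ifs <;> positivity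

lemma farPow_nonneg (a : ℝ) {t : ℝ} (ht : 0 ≤ t) : 0 ≤ farPow a t := by
  unfold farPow; split_ifs <;> positivity

lemma half_rpow_neg (b : ℝ) : (1 / 2 : ℝ) ^ (-b) = 2 ^ b := by
  rw [one_div, Real.inv_rpow (by norm_num), Real.rpow_neg (by norm_num), inv_inv]

/-- The rescaled pointwise estimate behind `riesz_bound`, with `t = ‖y - x‖/⟨x⟩`, `s = ‖y‖/⟨x⟩` and
`m = ⟨y⟩/⟨x⟩`: near either singularity the other factor is bounded, and elsewhere the product is at
most the `(a+b)`-th negative power of the smaller of `t` and `s`. -/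
lemma pow_split {a b t s m : ℝ} (ha : 0 ≤ a) (hb : 0 ≤ b) (ht : 0 < t) (hs : 0 < s)
    (hms : s ≤ m) (hmt : 1 ≤ m + t) :
    t ^ (-a) * m ^ (-b) ≤ 2 ^ b * nearPow a t + 2 ^ a * nearPow b s
      + (farPow (a + b) t + farPow (a + b) s) := by
  have hm : 0 < m := hs.trans_le hms
  have n1 := nearPow_nonneg a ht.le
  have n2 := nearPow_nonneg b hs.le
  have n3 := farPow_nonneg (a + b) ht.le
  have n4 := farPow_nonneg (a + b) hs.le
  have p1 : (0 : ℝ) < 2 ^ b := by positivity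
  have p2 : (0 : ℝ) < 2 ^ a := by positivity
  have hmsb : m ^ (-b) ≤ s ^ (-b) := Real.rpow_le_rpow_of_nonpos hs hms (by linarith)
  rcases lt_or_ge t (1 / 2) with h | h
  · have h1 : m ^ (-b) ≤ 2 ^ b := by
      rw [← half_rpow_neg]
      exact Real.rpow_le_rpow_of_nonpos (by norm_num) (by linarith) (by linarith)
    have h2 : nearPow a t = t ^ (-a) := if_pos (by linarith)
    have : t ^ (-a) * m ^ (-b) ≤ 2 ^ b * nearPow a t := by
      rw [h2, mul_comm]; gcongr
    have := mul_nonneg p2.le n2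
    linarith
  have hta : t ^ (-a) ≤ 2 ^ a := by
    rw [← half_rpow_neg]
    exact Real.rpow_le_rpow_of_nonpos (by norm_num) h (by linarith)
  rcases lt_or_ge s 1 with h' | h'
  · have h2 : nearPow b s = s ^ (-b) := if_pos h'
    have : t ^ (-a) * m ^ (-b) ≤ 2 ^ a * nearPow b s := by
      rw [h2]; gcongr
    have := mul_nonneg p1.le n1
    linarith
  have q1 := mul_nonneg p2.le n2
  have q2 := mul_nonneg p1.le n1
  rcases le_total t s with hts | hts
  · have : t ^ (-a) * m ^ (-b) ≤ farPow (a + b) t := by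
      rw [farPow, if_pos h, show -(a + b) = -a + -b by ring, Real.rpow_add ht]
      exact mul_le_mul_of_nonneg_left
        (hmsb.trans (Real.rpow_le_rpow_of_nonpos ht hts (by linarith))) (by positivity)
    linarith
  · have : t ^ (-a) * m ^ (-b) ≤ farPow (a + b) s := by
      rw [farPow, if_pos (by linarith), show -(a + b) = -a + -b by ring, Real.rpow_add hs]
      gcongr ?_ * ?_
      exact Real.rpow_le_rpow_of_nonpos hs hts (by linarith)
    linarith

lemma integrable_nearPow (hn : 1 ≤ n) {a : ℝ} (ha : a < n) :
    Integrable fun z : Euc n => nearPow a ‖z‖ := by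
  have hme : Measurable fun z : Euc n => ‖z‖ ^ (-a) := by fun_prop
  have h := integrableOn_ball_of_norm_le_rpow (E := Euc n) (μ := volume) (by simpa using hn)
    (f := fun z : Euc n => ‖z‖ ^ (-a)) (C := 1) (α := a) (r := 1) (by simpa using ha)
    (Eventually.of_forall fun z => by
      rw [Real.norm_of_nonneg (by positivity), one_mul])
    hme.aestronglyMeasurable
  rw [← integrable_indicator_iff measurableSet_ball] at h
  refine h.congr (Eventually.of_forall fun z => ?_)
  simp [Set.indicator, nearPow]

lemma integrable_farPow {c : ℝ} (hc : (n : ℝ) < c) :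
    Integrable fun z : Euc n => farPow c ‖z‖ := by
  have h := (integrable_one_add_norm (E := Euc n) (μ := volume) (r := c)
    (by simpa using hc)).const_mul (3 ^ c)
  have hc0 : 0 ≤ c := (Nat.cast_nonneg n).trans hc.le
  refine h.mono' ?_ (Eventually.of_forall fun z => ?_)
  · refine Measurable.aestronglyMeasurable ?_
    unfold farPow
    exact Measurable.ite (measurableSet_le measurable_const measurable_norm) (by fun_prop)
      measurable_const
  · rw [Real.norm_of_nonneg (farPow_nonneg c (norm_nonneg z)), farPow]
    split_ifs with hz
    · have hz0 : 0 < ‖z‖ := by linarith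
      calc ‖z‖ ^ (-c) ≤ ((1 + ‖z‖) / 3) ^ (-c) :=
            Real.rpow_le_rpow_of_nonpos (by positivity) (by linarith) (by linarith)
        _ = _ := by
            rw [Real.div_rpow (by positivity) (by norm_num), Real.rpow_neg (x := 3) (by norm_num),
              div_inv_eq_mul, mul_comm]
    · positivity

/-- `∫ ‖y - x‖^(-a) ⟨y⟩^(-b) dy ≤ C ⟨x⟩^(n-a-b)` when `a, b < n < a + b`. -/
lemma riesz_bound (hn : 1 ≤ n) {a b : ℝ} (ha : 0 ≤ a) (hb : 0 ≤ b) (han : a < n) (hbn : b < n)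
    (hab : n < a + b) : ∃ C > (0 : ℝ), ∀ x : Euc n,
    ∫⁻ y, ENNReal.ofReal (‖y - x‖ ^ (-a) * jap y ^ (-b))
      ≤ ENNReal.ofReal (C * jap x ^ ((n : ℝ) - a - b)) := by
  have iA := integrable_nearPow hn han
  have iB := integrable_nearPow hn hbn
  have iC := integrable_farPow hab
  set I1 := ∫ z : Euc n, nearPow a ‖z‖ with hI1
  set I2 := ∫ z : Euc n, nearPow b ‖z‖ with hI2
  set I3 := ∫ z : Euc n, farPow (a + b) ‖z‖ with hI3
  have I1n : 0 ≤ I1 := integral_nonneg fun z => nearPow_nonneg a (norm_nonneg z)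
  have I2n : 0 ≤ I2 := integral_nonneg fun z => nearPow_nonneg b (norm_nonneg z)
  have I3n : 0 ≤ I3 := integral_nonneg fun z => farPow_nonneg (a + b) (norm_nonneg z)
  refine ⟨2 ^ b * I1 + 2 ^ a * I2 + (I3 + I3) + 1, by positivity, fun x => ?_⟩
  set r := jap x with hr
  have hr0 : 0 < r := jap_pos x
  -- Rescaling by `r = ⟨x⟩` makes the bound uniform in `x`.
  have scal : ∀ {F : Euc n → ℝ}, Integrable F → ∀ w : Euc n,
      Integrable (fun y => F (r⁻¹ • (y - w))) ∧
        ∫ y, F (r⁻¹ • (y - w)) = r ^ n * ∫ z, F z := by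
    intro F hF w
    have h1 : Integrable fun y => F (r⁻¹ • y) := hF.comp_smul (inv_ne_zero hr0.ne')
    refine ⟨h1.comp_sub_right w, ?_⟩
    rw [integral_sub_right_eq_self (fun y => F (r⁻¹ • y)) w,
      Measure.integral_comp_smul]
    simp [abs_of_pos hr0]
  obtain ⟨j1, e1⟩ := scal iA x
  obtain ⟨j2, e2⟩ := scal iB 0
  obtain ⟨j3, e3⟩ := scal iC x
  obtain ⟨j4, e4⟩ := scal iC 0
  set G : Euc n → ℝ := fun y => r ^ (-(a + b)) * (2 ^ b * nearPow a ‖r⁻¹ • (y - x)‖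
      + 2 ^ a * nearPow b ‖r⁻¹ • (y - 0)‖
      + (farPow (a + b) ‖r⁻¹ • (y - x)‖ + farPow (a + b) ‖r⁻¹ • (y - 0)‖)) with hG
  have k1 := j1.const_mul (2 ^ b)
  have k2 := j2.const_mul (2 ^ a)
  have k12 := k1.add k2
  have k34 := j3.add j4
  have hGi : Integrable G := (k12.add k34).const_mul _
  have hGv : ∫ y, G y = (2 ^ b * I1 + 2 ^ a * I2 + (I3 + I3)) * r ^ ((n : ℝ) - a - b) := by
    have hpw : r ^ ((n : ℝ) - a - b) = r ^ (-(a + b)) * r ^ n := by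
      rw [← Real.rpow_natCast r n, ← Real.rpow_add hr0]; congr 1; ring
    rw [hG, integral_const_mul]
    have := integral_add k12 k34
    simp only [Pi.add_apply] at this
    rw [this, integral_add k1 k2, integral_add j3 j4, integral_const_mul, integral_const_mul,
      e1, e2, e3, e4, hpw]
    ring
  have hG0 : ∀ y, 0 ≤ G y := fun y => by
    have q1 := nearPow_nonneg a (norm_nonneg (r⁻¹ • (y - x)))
    have q2 := nearPow_nonneg b (norm_nonneg (r⁻¹ • (y - 0)))
    have q3 := farPow_nonneg (a + b) (norm_nonneg (r⁻¹ • (y - x)))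
    have q4 := farPow_nonneg (a + b) (norm_nonneg (r⁻¹ • (y - 0)))
    positivity
  have : Nontrivial (Euc n) := Module.nontrivial_of_finrank_pos (R := ℝ) (by simp; omega)
  have ae1 : ∀ᵐ y : Euc n, y ≠ x := compl_mem_ae_iff.2 (measure_singleton x)
  have ae2 : ∀ᵐ y : Euc n, y ≠ 0 := compl_mem_ae_iff.2 (measure_singleton 0)
  calc ∫⁻ y, ENNReal.ofReal (‖y - x‖ ^ (-a) * jap y ^ (-b))
      ≤ ∫⁻ y, ENNReal.ofReal (G y) := by
        refine lintegral_mono_ae ?_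
        filter_upwards [ae1, ae2] with y hyx hy0
        refine ENNReal.ofReal_le_ofReal ?_
        have t0 : 0 < ‖y - x‖ := norm_pos_iff.2 (sub_ne_zero.2 hyx)
        have s0 : 0 < ‖y‖ := norm_pos_iff.2 hy0
        have hnorm : ∀ z : Euc n, ‖r⁻¹ • z‖ = r⁻¹ * ‖z‖ := fun z => by
          rw [norm_smul, Real.norm_of_nonneg (by positivity)]
        have hsplit := pow_split (a := a) (b := b) (t := r⁻¹ * ‖y - x‖) (s := r⁻¹ * ‖y‖)
          (m := r⁻¹ * jap y) ha hb (by positivity) (by positivity)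
          (by gcongr; exact norm_le_jap y) (by
            rw [← mul_add, le_inv_mul_iff₀ hr0, mul_one]
            exact jap_lipschitz x y)
        have hrw : ‖y - x‖ ^ (-a) * jap y ^ (-b)
            = r ^ (-(a + b)) * ((r⁻¹ * ‖y - x‖) ^ (-a) * (r⁻¹ * jap y) ^ (-b)) := by
          rw [Real.mul_rpow (by positivity) t0.le, Real.mul_rpow (by positivity) (jap_pos y).le,
            Real.inv_rpow hr0.le, Real.inv_rpow hr0.le, show -(a + b) = -a + -b by ring,
            Real.rpow_add hr0]
          have := (Real.rpow_pos_of_pos hr0 (-a)).ne'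
          have := (Real.rpow_pos_of_pos hr0 (-b)).ne'
          field_simp
        rw [hrw]
        simp only [hG, sub_zero, hnorm]
        gcongr
    _ = ENNReal.ofReal (∫ y, G y) :=
        (ofReal_integral_eq_lintegral_ofReal hGi (Eventually.of_forall hG0)).symm
    _ ≤ _ := by
        rw [hGv]
        refine ENNReal.ofReal_le_ofReal ?_
        have := Real.rpow_pos_of_pos hr0 ((n : ℝ) - a - b)
        exact mul_le_mul_of_nonneg_right (by linarith) this.le

end Riesz

/-! ### Weighted Hölder estimates -/

section Holder
variable {n : ℕ}

lemma holder_real {p q : ℝ} (hpq : p.HolderConjugate q) {w h : Euc n → ℝ} (hw : Measurable w)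
    (hh : Measurable h) (hw0 : ∀ y, 0 ≤ w y) (hh0 : ∀ y, 0 ≤ h y) :
    ∫⁻ y, ENNReal.ofReal (w y * h y) ≤
      (∫⁻ y, ENNReal.ofReal (w y ^ q)) ^ (1 / q) * (∫⁻ y, ENNReal.ofReal (h y ^ p)) ^ (1 / p) := by
  have key := ENNReal.lintegral_mul_le_Lp_mul_Lq volume hpq.symm
    (f := fun y => ENNReal.ofReal (w y)) (g := fun y => ENNReal.ofReal (h y))
    hw.ennreal_ofReal.aemeasurable hh.ennreal_ofReal.aemeasurable
  simpa only [Pi.mul_apply, ← ENNReal.ofReal_mul (hw0 _),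
    ENNReal.ofReal_rpow_of_nonneg (hw0 _) hpq.symm.nonneg,
    ENNReal.ofReal_rpow_of_nonneg (hh0 _) hpq.nonneg] using key

/-- The convolution of `‖·‖^(1-n)` with a field in `L^p_{δ-2}` decays like `⟨x⟩^(δ-1)`: by Hölder
this reduces to `riesz_bound` with `a = (n-1)q` and `b = (2-δ-n/p)q`. -/
lemma newton_bound (hn : 3 ≤ n) {p δ : ℝ} (hp : (n : ℝ) < p) (hδ1 : 2 - (n : ℝ) < δ)
    (hδ2 : δ < 0) : ∃ C > (0 : ℝ), ∀ f : Euc n → Euc n, Continuous f → ∀ x,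
    ∫⁻ y, ENNReal.ofReal (‖y - x‖ ^ (1 - (n : ℝ)) * ‖f y‖)
      ≤ ENNReal.ofReal (C * jap x ^ (δ - 1)) * LpW p (δ - 2) f := by
  have hn3 : (3 : ℝ) ≤ n := by exact_mod_cast hn
  have hp0 : 0 < p := by linarith
  have hpq := Real.HolderConjugate.conjExponent (show 1 < p by linarith)
  set q := p.conjExponent with hq
  have hq0 : 0 < q := hpq.symm.pos
  have hnp : (n : ℝ) / p < 1 := (div_lt_one hp0).2 hp
  have hqp : q * (n - n / p) = n := by
    have h := hpq.inv_add_inv_eq_one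
    have h' : 1 - p⁻¹ = q⁻¹ := by linarith
    rw [div_eq_mul_inv, show (n : ℝ) - n * p⁻¹ = n * (1 - p⁻¹) by ring, h']
    field_simp
  set s := -(δ - 2) - (n : ℝ) / p with hs
  obtain ⟨C, hC, hR⟩ := riesz_bound (n := n) (a := (n - 1) * q) (b := s * q) (by omega)
    (mul_nonneg (by linarith) hq0.le) (mul_nonneg (by linarith) hq0.le)
    (by nlinarith) (by nlinarith) (by nlinarith)
  refine ⟨C ^ (1 / q), by positivity, fun f hf x => ?_⟩
  have hj := jap_pos x
  have hH := holder_real (n := n) hpq (w := fun y => ‖y - x‖ ^ (1 - (n : ℝ)) * jap y ^ (-s))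
    (h := fun y => jap y ^ s * ‖f y‖)
    (((measurable_id.sub_const x).norm.pow_const _).mul (continuous_jap_rpow _).measurable)
    ((continuous_jap_rpow _).measurable.mul hf.norm.measurable)
    (fun y => mul_nonneg (by positivity) (jap_rpow_pos _ y).le)
    (fun y => mul_nonneg (jap_rpow_pos _ y).le (by positivity))
  have e1 : ∀ y, ‖y - x‖ ^ (1 - (n : ℝ)) * jap y ^ (-s) * (jap y ^ s * ‖f y‖)
      = ‖y - x‖ ^ (1 - (n : ℝ)) * ‖f y‖ := fun y => by
    have := (jap_rpow_pos s y).ne'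
    rw [Real.rpow_neg (jap_pos y).le]
    field_simp
  have e2 : ∀ y, (‖y - x‖ ^ (1 - (n : ℝ)) * jap y ^ (-s)) ^ q
      = ‖y - x‖ ^ (-((n - 1) * q)) * jap y ^ (-(s * q)) := fun y => by
    rw [Real.mul_rpow (by positivity) (jap_rpow_pos _ y).le, ← Real.rpow_mul (norm_nonneg _),
      ← Real.rpow_mul (jap_pos y).le]
    congr 2 <;> ring
  simp only [e1, e2] at hH
  refine hH.trans ?_
  rw [show (∫⁻ y, ENNReal.ofReal ((jap y ^ s * ‖f y‖) ^ p)) ^ (1 / p) = LpW p (δ - 2) f from rfl]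
  gcongr
  have hfin : (C * jap x ^ ((n : ℝ) - (n - 1) * q - s * q)) ^ (1 / q)
      = C ^ (1 / q) * jap x ^ (δ - 1) := by
    rw [Real.mul_rpow hC.le (jap_rpow_pos _ x).le, ← Real.rpow_mul hj.le]
    congr 2
    rw [mul_one_div, div_eq_iff hq0.ne']
    linear_combination (norm := skip) (-1 : ℝ) * hqp
    rw [hs]; ring
  rw [← hfin, ← ENNReal.ofReal_rpow_of_nonneg
    (mul_nonneg hC.le (jap_rpow_pos _ x).le) (by positivity)]
  exact ENNReal.rpow_le_rpow (hR x) (by positivity)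

/-- A weighted `L^p` bound gives weighted integrability with any weight whose quotient by the given
one lies in the dual Lebesgue space. -/
lemma integrable_of_weighted {F : Type*} [NormedAddCommGroup F] {p s e : ℝ} (hp : 1 < p)
    {g : Euc n → F} (hg : Continuous g)
    (hfin : (∫⁻ y, ENNReal.ofReal ((jap y ^ s * ‖g y‖) ^ p)) ^ (1 / p) < ⊤)
    (he : e - s < -(n : ℝ) + n / p) :
    Integrable fun y => jap y ^ e * ‖g y‖ := by
  have hpq := Real.HolderConjugate.conjExponent hp
  set q := p.conjExponent with hq
  have hq0 : 0 < q := hpq.symm.pos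
  have hqp : q * (n - n / p) = n := by
    have h := hpq.inv_add_inv_eq_one
    have h' : 1 - p⁻¹ = q⁻¹ := by linarith
    rw [div_eq_mul_inv, show (n : ℝ) - n * p⁻¹ = n * (1 - p⁻¹) by ring, h']
    field_simp
  have hInt : Integrable fun y : Euc n => (jap y ^ (e - s)) ^ q := by
    have h := integrable_rpow_neg_one_add_norm_sq (E := Euc n) (μ := volume)
      (r := -((e - s) * q)) (by simp; nlinarith)
    refine h.congr (Eventually.of_forall fun y => ?_)
    dsimp only
    rw [← Real.rpow_mul (jap_pos y).le, jap, Real.sqrt_eq_rpow, ← Real.rpow_mul (by positivity)]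
    congr 1; ring
  have hH := holder_real (n := n) hpq (w := fun y => jap y ^ (e - s))
    (h := fun y => jap y ^ s * ‖g y‖) (continuous_jap_rpow _).measurable
    ((continuous_jap_rpow _).mul hg.norm).measurable
    (fun y => (jap_rpow_pos _ y).le)
    (fun y => mul_nonneg (jap_rpow_pos _ y).le (by positivity))
  have e1 : ∀ y, jap y ^ (e - s) * (jap y ^ s * ‖g y‖) = jap y ^ e * ‖g y‖ := fun y => by
    rw [← mul_assoc, ← Real.rpow_add (jap_pos y), sub_add_cancel]
  simp only [e1] at hH
  have hlt : ∫⁻ y, ENNReal.ofReal (jap y ^ e * ‖g y‖) < ⊤ := by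
    refine hH.trans_lt (ENNReal.mul_lt_top (ENNReal.rpow_lt_top_of_nonneg (by positivity) ?_) hfin)
    exact ((hasFiniteIntegral_iff_ofReal (Eventually.of_forall fun y =>
      Real.rpow_nonneg (jap_rpow_pos _ y).le q)).1 hInt.2).ne
  refine ⟨((continuous_jap_rpow _).mul hg.norm).aestronglyMeasurable, ?_⟩
  exact (hasFiniteIntegral_iff_ofReal (Eventually.of_forall fun y =>
    mul_nonneg (jap_rpow_pos _ y).le (norm_nonneg _))).2 hlt

lemma jap_add_le (x z : Euc n) : jap (x + z) ≤ (1 + ‖x‖) * jap z := by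
  have h := jap_lipschitz (x + z) z
  rw [show z - (x + z) = -x by abel, norm_neg] at h
  nlinarith [one_le_jap z, norm_nonneg x]

lemma integrable_translate {e : ℝ} (he : e ≤ 0) {G h : Euc n → ℝ} (x : Euc n)
    (hG : Integrable fun y => jap y ^ e * G y) (hh : Continuous h)
    (hle : ∀ z, |h z| ≤ G (x + z)) : Integrable fun z => jap z ^ e * |h z| := by
  refine ((hG.comp_add_left x).const_mul ((1 + ‖x‖) ^ (-e))).mono'
    ((continuous_jap_rpow _).mul hh.abs).aestronglyMeasurable (Eventually.of_forall fun z => ?_)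
  have hj := jap_rpow_pos e z
  rw [Real.norm_of_nonneg (mul_nonneg hj.le (abs_nonneg _)), ← mul_assoc]
  have h1 : ((1 + ‖x‖) * jap z) ^ e ≤ jap (x + z) ^ e :=
    Real.rpow_le_rpow_of_nonpos (jap_pos _) (jap_add_le x z) he
  rw [Real.mul_rpow (by positivity) (jap_pos z).le] at h1
  have h2 : (1 + ‖x‖) ^ (-e) * (1 + ‖x‖) ^ e = 1 := by
    rw [← Real.rpow_add (by positivity), neg_add_cancel, Real.rpow_zero]
  have h3 : (0 : ℝ) < (1 + ‖x‖) ^ (-e) := by positivity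
  refine mul_le_mul ?_ (hle z) (abs_nonneg _) (mul_nonneg h3.le (jap_rpow_pos _ _).le)
  calc jap z ^ e = (1 + ‖x‖) ^ (-e) * ((1 + ‖x‖) ^ e * jap z ^ e) := by
        rw [← mul_assoc, h2, one_mul]
    _ ≤ _ := by gcongr

end Holder

/-! ### Translation to an arbitrary base point -/

section Translation
variable {n : ℕ}

lemma pd_translate (x : Euc n) (i : Fin n) (g : Euc n → ℝ) :
    pd i (fun z => g (x + z)) = fun z => pd i g (x + z) := by
  funext z
  unfold pd
  rw [fderiv_comp_add_left]

lemma divg_translate (x : Euc n) (W : Euc n → Euc n) (z : Euc n) :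
    divg (fun z => W (x + z)) z = divg W (x + z) := by
  unfold divg
  exact Finset.sum_congr rfl fun i _ => congrFun (pd_translate x i fun y => W y i) z

lemma confKill_translate (x : Euc n) (W : Euc n → Euc n) (z : Euc n) :
    confKill (fun z => W (x + z)) z = confKill W (x + z) := by
  ext i j
  simp only [confKill, Matrix.of_apply, divg_translate]
  rw [congrFun (pd_translate x i fun y => W y j) z, congrFun (pd_translate x j fun y => W y i) z]

lemma vecLap_translate (x : Euc n) (W : Euc n → Euc n) (z : Euc n) :
    vecLap (fun z => W (x + z)) z = vecLap W (x + z) := by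
  unfold vecLap
  simp only [confKill_translate]
  congr 1
  funext j
  congr 1
  exact Finset.sum_congr rfl fun i _ => congrFun (pd_translate x i fun y => confKill W y i j) z

lemma abs_apply_le_norm (v : Euc n) (j : Fin n) : |v j| ≤ ‖v‖ := by
  simpa using PiLp.norm_apply_le v j

lemma pd_coord_eq {W : Euc n → Euc n} (hW : ContDiff ℝ (⊤ : ℕ∞) W) (i j : Fin n) (y : Euc n) :
    pd i (fun y => W y j) y = fderiv ℝ W y (EuclideanSpace.single i 1) j := by
  have h : HasFDerivAt (fun y => W y j) ((EuclideanSpace.proj j : Euc n →L[ℝ] ℝ).comp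
      (fderiv ℝ W y)) y :=
    (EuclideanSpace.proj j : Euc n →L[ℝ] ℝ).hasFDerivAt.comp y
      ((hW.differentiable (by simp)) y).hasFDerivAt
  rw [pd, h.fderiv]
  rfl

lemma abs_pd_le {W : Euc n → Euc n} (hW : ContDiff ℝ (⊤ : ℕ∞) W) (i j : Fin n) (y : Euc n) :
    |pd i (fun y => W y j) y| ≤ ‖iteratedFDeriv ℝ 1 W y‖ := by
  rw [pd_coord_eq hW, norm_iteratedFDeriv_one]
  refine (abs_apply_le_norm _ j).trans (((fderiv ℝ W y).le_opNorm _).trans ?_)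
  simp

lemma abs_pd_pd_le {W : Euc n → Euc n} (hW : ContDiff ℝ (⊤ : ℕ∞) W) (k i j : Fin n) (y : Euc n) :
    |pd k (pd i fun y => W y j) y| ≤ ‖iteratedFDeriv ℝ 2 W y‖ := by
  have hV : ContDiff ℝ (⊤ : ℕ∞) (fun y => fderiv ℝ W y (EuclideanSpace.single i 1)) :=
    (hW.fderiv_right (m := ((⊤ : ℕ∞) : WithTop ℕ∞)) (by simp)).clm_apply contDiff_const
  have hdW : DifferentiableAt ℝ (fderiv ℝ W) y :=
    (hW.fderiv_right (m := ((⊤ : ℕ∞) : WithTop ℕ∞)) (by simp)).differentiable (by simp) y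
  rw [show (pd i fun y => W y j) = fun y => fderiv ℝ W y (EuclideanSpace.single i 1) j from
    funext fun y => pd_coord_eq hW i j y, pd_coord_eq hV k j y,
    ← norm_iteratedFDeriv_fderiv, norm_iteratedFDeriv_one]
  refine (abs_apply_le_norm _ j).trans ?_
  rw [fderiv_clm_apply hdW (differentiableAt_const _)]
  simp only [fderiv_fun_const, Pi.zero_apply, ContinuousLinearMap.comp_zero, zero_add,
    ContinuousLinearMap.flip_apply]
  refine ((fderiv ℝ (fderiv ℝ W) y (EuclideanSpace.single k 1)).le_opNorm _).trans ?_
  refine (mul_le_mul_of_nonneg_right ((fderiv ℝ (fderiv ℝ W) y).le_opNorm _)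
    (norm_nonneg _)).trans ?_
  simp

end Translation

/-- **Pointwise decay of the conformal Killing derivative of the solution
(flat case of Proposition 3.3).** -/
theorem confKill_pointwise_decay (n : ℕ) (hn : 3 ≤ n) (p δ : ℝ) (hp : (n : ℝ) < p)
    (hδ1 : 2 - (n : ℝ) < δ) (hδ2 : δ < 0) :
    ∃ C > (0 : ℝ),
      ∀ (f W : Euc n → Euc n), ContDiff ℝ (⊤ : ℕ∞) f → LpW p (δ - 2) f < ⊤ →
        ContDiff ℝ (⊤ : ℕ∞) W → SobW 2 p δ W < ⊤ → (∀ x, vecLap W x = f x) →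
        ∀ x, frob (confKill W x) ≤ C * jap x ^ (δ - 1) * (LpW p (δ - 2) f).toReal := by
  have hn3 : (3 : ℝ) ≤ n := by exact_mod_cast hn
  obtain ⟨K, hK, hvec⟩ := vector_bound hn
  obtain ⟨C, hC, hnew⟩ := newton_bound hn hp hδ1 hδ2
  refine ⟨K * C, by positivity, fun f W hf hfin hW hSob hEq x => ?_⟩
  have hshift : ContDiff ℝ (⊤ : ℕ∞) (fun z : Euc n => x + z) := contDiff_const.add contDiff_id
  set A := C * jap x ^ (δ - 1) * (LpW p (δ - 2) f).toReal with hA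
  -- Each of the three summands of the Sobolev norm gives weighted integrability.
  have hInt : ∀ k : ℕ, k ≤ 2 →
      Integrable fun y => jap y ^ ((k : ℝ) - n - 1) * ‖iteratedFDeriv ℝ k W y‖ := by
    intro k hk
    have hterm := ENNReal.sum_lt_top.1 hSob k (Finset.mem_range.2 (by omega))
    exact integrable_of_weighted (by linarith)
      (hW.continuous_iteratedFDeriv (by exact_mod_cast le_top)) hterm (by linarith)
  have i0 := hInt 0 (by norm_num)
  have i1 := hInt 1 (by norm_num)
  have i2 := hInt 2 (by norm_num)
  have hW' : ContDiff ℝ (⊤ : ℕ∞) (fun z => W (x + z)) := hW.comp hshift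
  have hf' : ContDiff ℝ (⊤ : ℕ∞) (fun z => f (x + z)) := hf.comp hshift
  have : Nontrivial (Euc n) := Module.nontrivial_of_finrank_pos (R := ℝ) (by simp; omega)
  have hlin : ∀ ε > 0, ∫⁻ z, ENNReal.ofReal (kb ε z * ‖f (x + z)‖) ≤ ENNReal.ofReal A := by
    intro ε hε
    have hz0 : ∀ᵐ z : Euc n, z ≠ 0 := compl_mem_ae_iff.2 (measure_singleton 0)
    calc ∫⁻ z, ENNReal.ofReal (kb ε z * ‖f (x + z)‖)
        ≤ ∫⁻ z, ENNReal.ofReal (‖x + z - x‖ ^ (1 - (n : ℝ)) * ‖f (x + z)‖) := by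
          refine lintegral_mono_ae ?_
          filter_upwards [hz0] with z hz
          refine ENNReal.ofReal_le_ofReal (mul_le_mul_of_nonneg_right ?_ (norm_nonneg _))
          rw [add_sub_cancel_left]
          exact kb_le_norm hn ε hz
      _ = ∫⁻ y, ENNReal.ofReal (‖y - x‖ ^ (1 - (n : ℝ)) * ‖f y‖) :=
          lintegral_add_left_eq_self
            (fun y => ENNReal.ofReal (‖y - x‖ ^ (1 - (n : ℝ)) * ‖f y‖)) x
      _ ≤ ENNReal.ofReal (C * jap x ^ (δ - 1)) * LpW p (δ - 2) f := hnew f hf.continuous x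
      _ = ENNReal.ofReal A := by
          rw [hA, ENNReal.ofReal_mul (mul_nonneg hC.le (jap_rpow_pos _ x).le),
            ENNReal.ofReal_toReal hfin.ne]
  have hkf0 : ∀ ε > 0, ∀ z : Euc n, 0 ≤ kb ε z * ‖f (x + z)‖ := fun ε hε z =>
    mul_nonneg (kb_pos hε z).le (norm_nonneg _)
  have hkfi : ∀ ε > 0, Integrable fun z => kb ε z * ‖f (x + z)‖ := fun ε hε =>
    ⟨((continuous_kb hε).mul hf'.continuous.norm).aestronglyMeasurable,
      (hasFiniteIntegral_iff_ofReal (Eventually.of_forall (hkf0 ε hε))).2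
        ((hlin ε hε).trans_lt ENNReal.ofReal_lt_top)⟩
  have hA0 : 0 ≤ A := mul_nonneg (mul_nonneg hC.le (jap_rpow_pos _ x).le) ENNReal.toReal_nonneg
  have hmain := hvec (fun z => f (x + z)) (fun z => W (x + z)) A hf' hW'
    (fun z => by rw [vecLap_translate, hEq])
    (fun j => by
      have := integrable_translate (by norm_num; linarith) x i0
        (Sm.comp_coord hW' j).continuous (fun z => by
          rw [norm_iteratedFDeriv_zero]; exact abs_apply_le_norm _ j)
      simpa using this)
    (fun i j => by
      have := integrable_translate (by norm_num) x i1
        ((Sm.comp_coord hW' j).pd i).continuous (fun z => by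
          rw [pd_translate x i fun y => W y j]; exact abs_pd_le hW i j _)
      refine this.congr (Eventually.of_forall fun z => ?_)
      dsimp only
      congr 2
      push_cast; ring)
    (fun k i j => by
      have := integrable_translate (by norm_num; linarith) x i2
        (((Sm.comp_coord hW' j).pd i).pd k).continuous (fun z => by
          rw [pd_translate x i fun y => W y j, pd_translate x k]
          exact abs_pd_pd_le hW k i j _)
      refine this.congr (Eventually.of_forall fun z => ?_)
      dsimp only
      congr 2
      push_cast; ring)
    hkfi
    (fun ε hε => by
      rw [integral_eq_lintegral_of_nonneg_ae (Eventually.of_forall (hkf0 ε hε))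
        (hkfi ε hε).aestronglyMeasurable]
      exact ENNReal.toReal_le_of_le_ofReal hA0 (hlin ε hε))
  rw [confKill_translate, add_zero] at hmain
  calc frob (confKill W x) ≤ K * A := hmain
    _ = _ := by rw [hA]; ring
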